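/- arXiv:2512.20036 — 8 statements merged into one kernel-verified Lean document; each statement's English description precedes it below -/
import Mathlib

section
/- Let k be a fixed positive integer, let (a_i)_{i≥0} be a sequence of nonnegative real numbers, and let D ≥ 0. For each i ≥ 0 set A_i := max{a_i, a_{i+1}, …, a_{i+k}}. If a_{i+1+k} ≤ (1/8)·A_i + D for every i ≥ 0, then for every i ≥ k+1 one has A_i ≤ (1/8)^⌊i/(k+1)⌋ · max{A_0, A_1, …, A_k} + ((8+k)/7)·D. -/
/-- **Iteration lemma.** If `a_{i+1+k} ≤ (1/8) A_i + D` where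
`A_i = max {a_i, …, a_{i+k}}`, then
`A_i ≤ (1/8)^⌊i/(k+1)⌋ max{A_0,…,A_k} + ((8+k)/7) D` for all `i ≥ k+1`. -/
theorem iteration_lemma (k : ℕ) (hk : 0 < k) (a : ℕ → ℝ) (ha : ∀ i, 0 ≤ a i)
    (D : ℝ) (hD : 0 ≤ D) (A : ℕ → ℝ)
    (hA : ∀ i, A i = (Finset.range (k + 1)).sup' ⟨0, by simp⟩ (fun j => a (i + j)))
    (hrec : ∀ i, a (i + 1 + k) ≤ (1 / 8) * A i + D) :
    ∀ i, k + 1 ≤ i →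
      A i ≤ (1 / 8 : ℝ) ^ (i / (k + 1)) *
          ((Finset.range (k + 1)).sup' ⟨0, by simp⟩ A) + ((8 + (k : ℝ)) / 7) * D := by
  have hle : ∀ i j, j ≤ k → a (i + j) ≤ A i := by
    intro i j hj
    rw [hA i]
    exact Finset.le_sup' (fun j => a (i + j)) (Finset.mem_range.2 (by omega))
  have hub : ∀ i c, (∀ j, j ≤ k → a (i + j) ≤ c) → A i ≤ c := by
    intro i c h
    rw [hA i]
    refine Finset.sup'_le _ _ ?_
    intro j hj
    exact h j (by have := Finset.mem_range.1 hj; omega)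
  have hA0 : ∀ i, 0 ≤ A i := fun i => (ha (i + 0)).trans (hle i 0 (by omega))
  have hstep : ∀ i c, 8 / 7 * D ≤ c → A i ≤ c → A (i + 1) ≤ c := by
    intro i c hc h
    apply hub
    intro j hj
    rcases Nat.lt_or_ge j k with hjk | hjk
    · have := hle i (1 + j) (by omega)
      rw [← add_assoc] at this
      linarith
    · obtain rfl : j = k := by omega
      have := hrec i
      linarith
  have hsteps : ∀ i c, 8 / 7 * D ≤ c → A i ≤ c → ∀ j, A (i + j) ≤ c := by
    intro i c hc h j
    induction j with
    | zero => exact h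
    | succ j ih => exact hstep (i + j) c hc ih
  set M := (Finset.range (k + 1)).sup' ⟨0, by simp⟩ A with hM
  have hMle : ∀ i, i < k + 1 → A i ≤ M := fun i hi =>
    Finset.le_sup' A (Finset.mem_range.2 hi)
  have hM0 : 0 ≤ M := (hA0 0).trans (hMle 0 (by omega))
  have key : ∀ i, A i ≤ (1 / 8 : ℝ) ^ (i / (k + 1)) * M + 8 / 7 * D := by
    intro i
    induction i using Nat.strong_induction_on with
    | _ i ih =>
      rcases Nat.lt_or_ge i (k + 1) with hi | hi
      · rw [Nat.div_eq_of_lt hi]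
        have := hMle i hi
        linarith
      · obtain ⟨n, rfl⟩ := Nat.exists_eq_add_of_le' hi
        have h1 := ih n (by omega)
        rw [Nat.add_div_right n (by omega : 0 < k + 1), pow_succ]
        have hp : 0 ≤ (1 / 8 : ℝ) ^ (n / (k + 1)) * M := by positivity
        have h2 := hsteps n _ (by linarith) h1
        apply hub
        intro j _
        have h3 := hrec (n + j)
        have h4 := h2 j
        rw [show n + (k + 1) + j = n + j + 1 + k by ring]
        linarith
  intro i _
  have h1 := key i
  have h2 : 0 ≤ (k : ℝ) * D := by positivity
  linarith
end

section
/- Along any characteristic curve of the Taylor–Couette transport field, the quantity (1 − X(s))·V_φ(s) − (α/(2η₁))·(1 − X(s))² is constant in s. Consequently, if X(t) = η and V_φ(t) = v_φ for some t in the interval, then for all s in the interval V_φ(s) = (1−η)/(1−X(s))·v_φ + (α/(2η₁))·(1−X(s)) − (α/(2η₁))·(1−η)²/(1−X(s)). -/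
open Set

/-- Along any characteristic curve of the Taylor–Couette transport field, the
quantity `(1 − X(s)) V_φ(s) − (α/(2η₁)) (1 − X(s))²` is constant; consequently,
if `X(t) = η` and `V_φ(t) = v_φ`, then
`V_φ(s) = (1−η)/(1−X(s)) v_φ + (α/(2η₁))(1−X(s)) − (α/(2η₁))(1−η)²/(1−X(s))`. -/
theorem angular_momentum_invariant
    (α η₁ : ℝ) (hα : 0 < α) (hη₁ : 0 < η₁) (hη₁' : η₁ < 1)
    (I : Set ℝ) (hI : I.OrdConnected)
    (X Vη Vφ Vz : ℝ → ℝ)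
    (hX1 : ∀ s ∈ I, X s < 1)
    (hX : ∀ s ∈ I, HasDerivAt X (Vη s) s)
    (hVη : ∀ s ∈ I, HasDerivAt Vη (-(Vφ s) ^ 2 / (1 - X s)) s)
    (hVφ : ∀ s ∈ I, HasDerivAt Vφ (Vη s * Vφ s / (1 - X s) - α / η₁ * Vη s) s)
    (hVz : ∀ s ∈ I, HasDerivAt Vz 0 s) :
    (∀ s ∈ I, ∀ t ∈ I,
        (1 - X s) * Vφ s - α / (2 * η₁) * (1 - X s) ^ 2
          = (1 - X t) * Vφ t - α / (2 * η₁) * (1 - X t) ^ 2)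
    ∧ ∀ t ∈ I, ∀ η vφ : ℝ, X t = η → Vφ t = vφ → ∀ s ∈ I,
        Vφ s = (1 - η) / (1 - X s) * vφ + α / (2 * η₁) * (1 - X s)
          - α / (2 * η₁) * (1 - η) ^ 2 / (1 - X s) := by
  have key : ∀ s ∈ I, ∀ t ∈ I,
        (1 - X s) * Vφ s - α / (2 * η₁) * (1 - X s) ^ 2
          = (1 - X t) * Vφ t - α / (2 * η₁) * (1 - X t) ^ 2 := by
    have hd : ∀ s ∈ I, HasDerivWithinAt
        (fun s => (1 - X s) * Vφ s - α / (2 * η₁) * (1 - X s) ^ 2) 0 I s := by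
      intro s hs
      have h1 : HasDerivAt (fun s => 1 - X s) (-Vη s) s := (hX s hs).const_sub 1
      have h2 := (h1.mul (hVφ s hs)).sub ((h1.pow 2).const_mul (α / (2 * η₁)))
      have hne : 1 - X s ≠ 0 := by linarith [hX1 s hs]
      refine (HasDerivAt.congr_deriv h2 ?_).hasDerivWithinAt
      field_simp
      ring
    intro s hs t ht
    have h := hI.convex.norm_image_sub_le_of_norm_hasDerivWithin_le (C := 0) hd
      (fun x _ => by simp) ht hs
    rw [zero_mul] at h
    exact sub_eq_zero.mp (norm_le_zero_iff.mp h)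
  refine ⟨key, ?_⟩
  rintro t ht η vφ rfl rfl s hs
  have h := key s hs t ht
  have hne : 1 - X s ≠ 0 := by linarith [hX1 s hs]
  have h3 : Vφ s = ((1 - X t) * Vφ t - α / (2 * η₁) * (1 - X t) ^ 2
      + α / (2 * η₁) * (1 - X s) ^ 2) / (1 - X s) := by
    rw [eq_div_iff hne]
    linarith
  rw [h3]
  field_simp
  ring
end

section
/- Let X, V_η, V_φ, V_z be a characteristic curve of the Taylor–Couette transport field on an interval I, and suppose X(t) = η, V_η(t) = v_η, V_φ(t) = v_φ at some t ∈ I. Then for every s ∈ I the radial velocity satisfies the energy identity V_η(s)² = v_η² + ∫_{X(s)}^{η} (2/(1−y)) · [ (1−η)/(1−y)·v_φ + (α/(2η₁))·(1−y) − (α/(2η₁))·(1−η)²/(1−y) ]² dy. -/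
open Set MeasureTheory

theorem const_of_hasDerivAt_zero (I : Set ℝ) (hI : I.OrdConnected) (f : ℝ → ℝ)
    (hf : ∀ s ∈ I, HasDerivAt f 0 s) (s t : ℝ) (hs : s ∈ I) (ht : t ∈ I) : f s = f t := by
  have h := hI.convex.norm_image_sub_le_of_norm_hasDerivWithin_le (f := f) (f' := fun _ => 0)
    (C := 0) (fun x hx => (hf x hx).hasDerivWithinAt) (fun x _ => by simp) ht hs
  have h2 : ‖f s - f t‖ ≤ 0 := by simpa using h
  exact sub_eq_zero.mp (norm_le_zero_iff.mp h2)

/-- Energy identity for the radial velocity along a characteristic curve of the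
Taylor–Couette transport field: if `X(t) = η`, `V_η(t) = v_η`, `V_φ(t) = v_φ`, then
`V_η(s)² = v_η² + ∫_{X(s)}^{η} (2/(1−y)) [ (1−η)/(1−y) v_φ + (α/(2η₁))(1−y)
  − (α/(2η₁))(1−η)²/(1−y) ]² dy`. -/
theorem radial_velocity_energy_identity
    (α η₁ : ℝ) (hα : 0 < α) (hη₁ : 0 < η₁) (hη₁' : η₁ < 1)
    (I : Set ℝ) (hI : I.OrdConnected)
    (X Vη Vφ Vz : ℝ → ℝ)
    (hX1 : ∀ s ∈ I, X s < 1)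
    (hX : ∀ s ∈ I, HasDerivAt X (Vη s) s)
    (hVη : ∀ s ∈ I, HasDerivAt Vη (-(Vφ s) ^ 2 / (1 - X s)) s)
    (hVφ : ∀ s ∈ I, HasDerivAt Vφ (Vη s * Vφ s / (1 - X s) - α / η₁ * Vη s) s)
    (hVz : ∀ s ∈ I, HasDerivAt Vz 0 s)
    (t : ℝ) (ht : t ∈ I) (η vη vφ : ℝ)
    (hXt : X t = η) (hVηt : Vη t = vη) (hVφt : Vφ t = vφ) :
    ∀ s ∈ I,
      (Vη s) ^ 2 = vη ^ 2 + ∫ y in (X s)..η,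
        2 / (1 - y) * ((1 - η) / (1 - y) * vφ + α / (2 * η₁) * (1 - y)
          - α / (2 * η₁) * (1 - η) ^ 2 / (1 - y)) ^ 2 := by
  set g : ℝ → ℝ := fun y => 2 / (1 - y) * ((1 - η) / (1 - y) * vφ + α / (2 * η₁) * (1 - y)
          - α / (2 * η₁) * (1 - η) ^ 2 / (1 - y)) ^ 2 with hg
  have hη1 : η < 1 := hXt ▸ hX1 t ht
  have hne : ∀ y ∈ Iio (1 : ℝ), 1 - y ≠ 0 := fun y hy => (sub_pos.mpr hy).ne'
  have hgc : ContinuousOn g (Iio 1) := by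
    have h1 : ContinuousOn (fun y : ℝ => 1 - y) (Iio 1) := by fun_prop
    exact (continuousOn_const.div h1 hne).mul
      (((((continuousOn_const.div h1 hne).mul continuousOn_const).add
        (continuousOn_const.mul h1)).sub (continuousOn_const.div h1 hne)).pow 2)
  have hG : ∀ x < 1, HasDerivAt (fun u => ∫ y in η..u, g y) (g x) x := by
    intro x hx
    apply intervalIntegral.integral_hasDerivAt_right
    · apply ContinuousOn.intervalIntegrable
      apply hgc.mono
      exact (ordConnected_Iio).uIcc_subset hη1 hx
    · exact hgc.stronglyMeasurableAtFilter isOpen_Iio x hx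
    · exact hgc.continuousAt (Iio_mem_nhds hx)
  have hA : ∀ s ∈ I, (1 - X s) * Vφ s - α / (2 * η₁) * (1 - X s) ^ 2
      = (1 - η) * vφ - α / (2 * η₁) * (1 - η) ^ 2 := by
    intro s hs
    rw [← hXt, ← hVφt]
    refine const_of_hasDerivAt_zero I hI
      (fun s => (1 - X s) * Vφ s - α / (2 * η₁) * (1 - X s) ^ 2) ?_ s t hs ht
    intro r hr
    have h1 := (hX r hr).const_sub 1
    have hn := hne _ (hX1 r hr)
    refine ((h1.mul (hVφ r hr)).sub ((h1.pow 2).const_mul (α / (2 * η₁)))).congr_deriv ?_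
    norm_num
    field_simp
    ring
  have hB : ∀ s ∈ I, Vη s ^ 2 + ∫ y in η..(X s), g y = vη ^ 2 := by
    intro s hs
    have := const_of_hasDerivAt_zero I hI
      (fun s => Vη s ^ 2 + ∫ y in η..(X s), g y) ?_ s t hs ht
    · simpa [hXt, hVηt] using this
    intro r hr
    have hn := hne _ (hX1 r hr)
    have h2 := (hG _ (hX1 r hr)).comp r (hX r hr)
    refine (((hVη r hr).pow 2).add h2).congr_deriv ?_
    have hv : (1 - η) / (1 - X r) * vφ + α / (2 * η₁) * (1 - X r)
          - α / (2 * η₁) * (1 - η) ^ 2 / (1 - X r) = Vφ r := by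
      have e : (1 - η) / (1 - X r) * vφ + α / (2 * η₁) * (1 - X r)
          - α / (2 * η₁) * (1 - η) ^ 2 / (1 - X r)
          = ((1 - η) * vφ - α / (2 * η₁) * (1 - η) ^ 2) / (1 - X r)
            + α / (2 * η₁) * (1 - X r) := by ring
      rw [e, ← hA r hr]
      generalize α / (2 * η₁) = c
      field_simp
      ring
    simp only [hg, hv]
    norm_num
    ring
  intro s hs
  rw [intervalIntegral.integral_symm]
  linarith [hB s hs]
end

section
/- Fix α > 0, η₁ ∈ (0,1), η ∈ [0,1) and v_φ ∈ ℝ, and define Φ(y) := (1−η)/(1−y)·v_φ + (α/(2η₁))·(1−y) − (α/(2η₁))·(1−η)²/(1−y) for y ∈ [η,1). If (1−η)·v_φ ≠ (α/(2η₁))·(1−η)², then the improper integral ∫_{η}^{1} (2/(1−y))·Φ(y)² dy diverges to +∞, and consequently for every v_η ∈ ℝ there exists η₊ ∈ [η, 1) such that v_η² = ∫_{η}^{η₊} (2/(1−y))·Φ(y)² dy. -/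
open Set MeasureTheory Filter

/-- If `(1−η) v_φ ≠ (α/(2η₁)) (1−η)²`, the improper integral
`∫_η^1 (2/(1−y)) Φ(y)² dy` of the transported angular velocity diverges to `+∞`,
so for every `v_η` there is a turning point `η₊ ∈ [η,1)` with
`v_η² = ∫_η^{η₊} (2/(1−y)) Φ(y)² dy`. -/
theorem turning_point_exists
    (α η₁ η vφ : ℝ) (hα : 0 < α) (hη₁ : 0 < η₁) (hη₁' : η₁ < 1)
    (hη : 0 ≤ η) (hη' : η < 1)
    (Φ : ℝ → ℝ)
    (hΦ : ∀ y, Φ y = (1 - η) / (1 - y) * vφ + α / (2 * η₁) * (1 - y)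
        - α / (2 * η₁) * (1 - η) ^ 2 / (1 - y))
    (hne : (1 - η) * vφ ≠ α / (2 * η₁) * (1 - η) ^ 2) :
    Tendsto (fun b => ∫ y in η..b, 2 / (1 - y) * (Φ y) ^ 2)
        (nhdsWithin 1 (Set.Iio 1)) atTop
    ∧ ∀ vη : ℝ, ∃ ηp, η ≤ ηp ∧ ηp < 1 ∧
        vη ^ 2 = ∫ y in η..ηp, 2 / (1 - y) * (Φ y) ^ 2 := by
  obtain ⟨c, hc⟩ : ∃ c, c = (1 - η) * vφ - α / (2 * η₁) * (1 - η) ^ 2 := ⟨_, rfl⟩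
  obtain ⟨k, hk⟩ : ∃ k, k = α / (2 * η₁) := ⟨_, rfl⟩
  have hc0 : c ≠ 0 := by rw [hc]; exact sub_ne_zero.mpr hne
  have hΦ2 : ∀ y, y < 1 → Φ y = c / (1 - y) + k * (1 - y) := by
    intro y hy
    rw [hΦ, hc, ← hk]
    ring
  obtain ⟨F, hF⟩ : ∃ F : ℝ → ℝ, ∀ y, F y =
      ((1 - y) ^ 2)⁻¹ * (c ^ 2 - 4 * c * k * ((1 - y) * ((1 - y) * Real.log (1 - y)))
        - k ^ 2 * (1 - y) ^ 4) := ⟨_, fun _ => rfl⟩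
  have hF2 : ∀ y, y < 1 → F y =
      c ^ 2 * ((1 - y) ^ 2)⁻¹ - 4 * c * k * Real.log (1 - y) - k ^ 2 * (1 - y) ^ 2 := by
    intro y hy
    have : 1 - y ≠ 0 := by linarith
    rw [hF]
    field_simp
  have hderiv : ∀ y, y < 1 → HasDerivAt F (2 / (1 - y) * (Φ y) ^ 2) y := by
    intro y hy
    have h0 : 1 - y ≠ 0 := by linarith
    have h1 : HasDerivAt (fun y : ℝ => 1 - y) (-1) y := by
      simpa using (hasDerivAt_id y).const_sub 1
    have h2 := (((h1.pow 2).inv (pow_ne_zero 2 h0)).const_mul (c ^ 2)).sub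
      ((h1.log h0).const_mul (4 * c * k)) |>.sub ((h1.pow 2).const_mul (k ^ 2))
    have h3 := h2.congr_of_eventuallyEq (f₁ := F) (by
      filter_upwards [Iio_mem_nhds hy] with z hz
      simpa using hF2 z hz)
    refine h3.congr_deriv ?_
    rw [hΦ2 y hy]
    simp
    field_simp
    ring
  have hcont : ContinuousOn (fun y => 2 / (1 - y) * (Φ y) ^ 2) (Iio 1) := by
    have : ContinuousOn (fun y => 2 / (1 - y) * (c / (1 - y) + k * (1 - y)) ^ 2) (Iio 1) := by
      have h : ∀ y ∈ Iio (1 : ℝ), 1 - y ≠ 0 := fun y hy => by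
        have : y < 1 := hy
        linarith
      fun_prop (disch := assumption)
    exact this.congr fun y hy => by simp only [hΦ2 y hy]
  have hint : ∀ b, b < 1 → ∫ y in η..b, 2 / (1 - y) * (Φ y) ^ 2 = F b - F η := by
    intro b hb
    have hsub : uIcc η b ⊆ Iio 1 := fun y hy => lt_of_le_of_lt hy.2 (max_lt hη' hb)
    exact intervalIntegral.integral_eq_sub_of_hasDerivAt (fun y hy => hderiv y (hsub hy))
      ((hcont.mono hsub).intervalIntegrable)
  have hFt : Tendsto F (nhdsWithin 1 (Iio 1)) atTop := by
    have hA : Tendsto (fun y : ℝ => ((1 - y) ^ 2)⁻¹) (nhdsWithin 1 (Iio 1)) atTop := by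
      apply Tendsto.inv_tendsto_nhdsGT_zero
      apply tendsto_nhdsWithin_iff.mpr
      refine ⟨?_, ?_⟩
      · have : Continuous (fun y : ℝ => (1 - y) ^ 2) := by fun_prop
        simpa using (this.tendsto 1).mono_left nhdsWithin_le_nhds
      · filter_upwards [self_mem_nhdsWithin] with y hy
        have : 0 < 1 - y := sub_pos.mpr hy
        exact pow_pos this 2
    have hl : Continuous (fun y : ℝ => (1 - y) * Real.log (1 - y)) :=
      Real.continuous_mul_log.comp (continuous_const.sub continuous_id)
    have hB : Continuous (fun y : ℝ => c ^ 2 - 4 * c * k * ((1 - y) * ((1 - y) * Real.log (1 - y)))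
        - k ^ 2 * (1 - y) ^ 4) := by fun_prop
    have hB' := (hB.tendsto 1).mono_left (nhdsWithin_le_nhds (s := Iio 1))
    have := hA.atTop_mul_pos (by simp; positivity) hB'
    exact this.congr fun y => (hF y).symm
  have hT : Tendsto (fun b => ∫ y in η..b, 2 / (1 - y) * (Φ y) ^ 2)
      (nhdsWithin 1 (Set.Iio 1)) atTop := by
    refine (tendsto_atTop_add_const_right _ (-F η) hFt).congr' ?_
    filter_upwards [self_mem_nhdsWithin] with b hb
    rw [hint b hb]; ring
  refine ⟨hT, fun v => ?_⟩
  have hev : ∀ᶠ b in nhdsWithin (1 : ℝ) (Iio 1), η ≤ b ∧ b < 1 ∧ v ^ 2 + F η ≤ F b := by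
    filter_upwards [self_mem_nhdsWithin, hFt.eventually_ge_atTop (v ^ 2 + F η),
      mem_nhdsWithin_of_mem_nhds (Ioi_mem_nhds hη')] with b h1 h2 h3
    exact ⟨le_of_lt h3, h1, h2⟩
  obtain ⟨b, hb1, hb2, hb3⟩ := hev.exists
  have hFc : ContinuousOn F (Icc η b) := fun y hy =>
    (hderiv y (lt_of_le_of_lt hy.2 hb2)).continuousAt.continuousWithinAt
  obtain ⟨p, hp, hpF⟩ := intermediate_value_Icc hb1 hFc
    (show v ^ 2 + F η ∈ Icc (F η) (F b) from ⟨by nlinarith [sq_nonneg v], hb3⟩)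
  have hp1 : p < 1 := lt_of_le_of_lt hp.2 hb2
  exact ⟨p, hp.1, hp1, by rw [hint p hp1, hpF]; ring⟩
end

section
/- Fix η₁ ∈ (0,1). There exist constants C > 0 and α₀ > 0, depending only on η₁, with the following property: for every α ∈ (0, α₀) and every v = (v_η, v_φ, v_z) ∈ ℝ³ such that v_η² ≥ I(v_φ), where I(v_φ) := ∫_{0}^{η₁} (2/(1−y))·[ v_φ/(1−y) + (α/(2η₁))(1−y) − (α/(2η₁))/(1−y) ]² dy, the transported velocity W across the channel, defined by W_φ := v_φ/(1−η₁) + (α/(2η₁))·(1−η₁) − (α/(2η₁))/(1−η₁), W_η² := v_η² − I(v_φ), W_z := v_z, satisfies the two-sided comparability (1 − C·α)·(1 + |v|²) ≤ 1 + W_η² + W_φ² + W_z² ≤ (1 + C·α)·(1 + |v|²). -/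
open MeasureTheory Real

theorem Iv_formula (η₁ : ℝ) (hη₁ : 0 < η₁) (hη₁' : η₁ < 1) (a v : ℝ) :
    (∫ y in (0 : ℝ)..η₁, 2 / (1 - y) * (v / (1 - y) + a * (1 - y) - a / (1 - y)) ^ 2)
      = (v - a) ^ 2 / (1 - η₁) ^ 2 - 4 * a * (v - a) * log (1 - η₁) - a ^ 2 * (1 - η₁) ^ 2
        - ((v - a) ^ 2 - a ^ 2) := by
  have hne : ∀ y ∈ Set.uIcc (0 : ℝ) η₁, (1 - y) ≠ 0 := by
    intro y hy
    rw [Set.uIcc_of_le hη₁.le] at hy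
    have := hy.2
    intro h
    linarith
  rw [intervalIntegral.integral_eq_sub_of_hasDerivAt (f := fun y =>
    (v - a) ^ 2 / (1 - y) ^ 2 - 4 * a * (v - a) * log (1 - y) - a ^ 2 * (1 - y) ^ 2)]
  · simp
  · intro y hy
    have h0 := hne y hy
    have h1 : HasDerivAt (fun y : ℝ => 1 - y) (-1) y := by
      simpa using (hasDerivAt_id y).const_sub 1
    have h2 := (((hasDerivAt_const y ((v - a) ^ 2)).fun_div (h1.fun_pow 2)
      (pow_ne_zero 2 h0)).fun_sub ((h1.log h0).const_mul (4 * a * (v - a)))).fun_sub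
      ((h1.fun_pow 2).const_mul (a ^ 2))
    convert h2 using 1
    field_simp
    ring
  · apply ContinuousOn.intervalIntegrable
    have hc : ContinuousOn (fun y : ℝ => 1 - y) (Set.uIcc 0 η₁) := by fun_prop
    exact (continuousOn_const.div hc hne).mul
      ((((continuousOn_const.div hc hne).add (continuousOn_const.mul hc)).sub
        (continuousOn_const.div hc hne)).pow 2)

/-- Two-sided comparability of `1 + |v|²` under transport across the whole channel:
there are `C > 0` and `α₀ > 0` such that for `α ∈ (0, α₀)` and any `v` whose
trajectory crosses the channel (`v_η² ≥ I(v_φ)`), the transported velocity `W`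
satisfies `(1 − Cα)(1 + |v|²) ≤ 1 + |W|² ≤ (1 + Cα)(1 + |v|²)`. -/
theorem transported_velocity_comparable
    (η₁ : ℝ) (hη₁ : 0 < η₁) (hη₁' : η₁ < 1) :
    ∃ C > 0, ∃ α₀ > 0, ∀ α : ℝ, 0 < α → α < α₀ →
      ∀ vη vφ vz : ℝ,
      ∀ Iv : ℝ, Iv = (∫ y in (0 : ℝ)..η₁,
          2 / (1 - y) * (vφ / (1 - y) + α / (2 * η₁) * (1 - y)
            - α / (2 * η₁) / (1 - y)) ^ 2) →
      Iv ≤ vη ^ 2 →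
      ∀ Wφ : ℝ, Wφ = vφ / (1 - η₁) + α / (2 * η₁) * (1 - η₁)
          - α / (2 * η₁) / (1 - η₁) →
      (1 - C * α) * (1 + (vη ^ 2 + vφ ^ 2 + vz ^ 2))
          ≤ 1 + ((vη ^ 2 - Iv) + Wφ ^ 2 + vz ^ 2)
        ∧ 1 + ((vη ^ 2 - Iv) + Wφ ^ 2 + vz ^ 2)
          ≤ (1 + C * α) * (1 + (vη ^ 2 + vφ ^ 2 + vz ^ 2)) := by
  have hs : 0 < 1 - η₁ := by linarith
  have hL : log (1 - η₁) ≤ 0 := Real.log_nonpos hs.le (by linarith)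
  obtain ⟨L, hLdef⟩ : ∃ L, L = -log (1 - η₁) := ⟨_, rfl⟩
  have hL0 : 0 ≤ L := by linarith
  obtain ⟨k, hk⟩ : ∃ k, k = 1 / (2 * η₁) := ⟨_, rfl⟩
  have hk0 : 0 < k := by rw [hk]; positivity
  refine ⟨2 * k ^ 2 + 4 * k * L + 4 * k ^ 2 * L, by positivity, 1, one_pos, ?_⟩
  intro α hα hα1 vη v vz Iv hIv _ W hW
  have ha : α / (2 * η₁) = k * α := by rw [hk]; ring
  rw [ha] at hIv hW
  rw [Iv_formula η₁ hη₁ hη₁'] at hIv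
  have hD : W ^ 2 - Iv = v ^ 2 - 2 * (k * α) ^ 2 * (1 - (1 - η₁) ^ 2)
      - 4 * (k * α) * (v - k * α) * L := by
    rw [hW, hIv, hLdef]
    field_simp
    ring
  have hq0 : 0 ≤ 1 - (1 - η₁) ^ 2 := by nlinarith
  have hq1 : 1 - (1 - η₁) ^ 2 ≤ 1 := by nlinarith
  have hα2 : α ^ 2 ≤ α := by nlinarith
  have e1 : 2 * (k * α) ^ 2 * (1 - (1 - η₁) ^ 2) ≤ 2 * k ^ 2 * α := by
    calc _ ≤ 2 * (k * α) ^ 2 * 1 := by gcongr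
      _ = 2 * k ^ 2 * α ^ 2 := by ring
      _ ≤ _ := by gcongr
  have e1' : 0 ≤ 2 * (k * α) ^ 2 * (1 - (1 - η₁) ^ 2) := by positivity
  have e2 : 4 * k ^ 2 * L * α ^ 2 ≤ 4 * k ^ 2 * L * α := by gcongr
  have e2' : 0 ≤ 4 * k ^ 2 * L * α ^ 2 := by positivity
  have e3 : 4 * k * L * α * v ≤ 4 * k * L * α * (1 + v ^ 2) :=
    mul_le_mul_of_nonneg_left (by nlinarith [sq_nonneg (v - 1)]) (by positivity)
  have e3' : 4 * k * L * α * (-v) ≤ 4 * k * L * α * (1 + v ^ 2) :=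
    mul_le_mul_of_nonneg_left (by nlinarith [sq_nonneg (v + 1)]) (by positivity)
  have e4 : 0 ≤ (2 * k ^ 2 + 4 * k ^ 2 * L) * α * v ^ 2 := by positivity
  have e5 : 0 ≤ (2 * k ^ 2 + 4 * k * L + 4 * k ^ 2 * L) * α * (vη ^ 2 + vz ^ 2) := by positivity
  constructor <;> linarith
end

section
/- Fix η₁ ∈ (0,1). For every τ ∈ (0,1) there exist α₀ ∈ (0,1) and a constant C_τ > 0 such that for every α ∈ (0, α₀) and every continuously differentiable function f : [0,η₁] × ℝ³ → ℝ for which f and Tf are integrable on (0,η₁) × ℝ³, one has ∫_{{v : v_η ≥ τ, |v_φ| ≥ τ, |v| ≤ 1/τ}} |f(η₁, v)|·|v_η| dv + ∫_{{v : v_η ≤ −τ, |v_φ| ≥ τ, |v| ≤ 1/τ}} |f(0, v)|·|v_η| dv ≤ C_τ·( ‖f‖_{L¹((0,η₁)×ℝ³)} + ‖Tf‖_{L¹((0,η₁)×ℝ³)} ), where Tf := v_η·∂_η f − (1/(1−η))·( v_φ²·∂_{v_η} f − v_η v_φ·∂_{v_φ} f ) − (α/η₁)·v_η·∂_{v_φ}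 f. -/
open MeasureTheory Set

lemma stl_ibp (w g : ℝ × ℝ × ℝ → ℝ) (hw : ContDiff ℝ 1 w) (hc : HasCompactSupport w)
    (hg : ContDiff ℝ 1 g) (e : ℝ × ℝ × ℝ) :
    Integrable (fun v => w v * fderiv ℝ g v e + fderiv ℝ w v e * g v) ∧
    ∫ v, (w v * fderiv ℝ g v e + fderiv ℝ w v e * g v) = 0 := by
  have cw : Continuous fun v => fderiv ℝ w v e :=
    (hw.continuous_fderiv one_ne_zero).clm_apply continuous_const
  have cg : Continuous fun v => fderiv ℝ g v e :=
    (hg.continuous_fderiv one_ne_zero).clm_apply continuous_const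
  have hcw : HasCompactSupport fun v => fderiv ℝ w v e := hc.fderiv_apply (𝕜 := ℝ) e
  have i1 : Integrable (fun v => w v * fderiv ℝ g v e) :=
    (hw.continuous.mul cg).integrable_of_hasCompactSupport hc.mul_right
  have i2 : Integrable (fun v => fderiv ℝ w v e * g v) :=
    (cw.mul hg.continuous).integrable_of_hasCompactSupport hcw.mul_right
  have i3 : Integrable (fun v => w v * g v) :=
    (hw.continuous.mul hg.continuous).integrable_of_hasCompactSupport hc.mul_right
  have hh2 : (volume : Measure (ℝ × ℝ)).IsAddHaarMeasure :=
    Measure.prod.instIsAddHaarMeasure volume volume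
  have hh3 : (volume : Measure (ℝ × ℝ × ℝ)).IsAddHaarMeasure :=
    Measure.prod.instIsAddHaarMeasure volume volume
  refine ⟨i1.add i2, ?_⟩
  rw [integral_add i1 i2, integral_mul_fderiv_eq_neg_fderiv_mul_of_integrable i2 i1 i3
    (fun x _ => (hw.differentiable one_ne_zero) x) (fun x _ => (hg.differentiable one_ne_zero) x)]
  ring

/-- The transport operator. -/
noncomputable def stlT (η₁ α : ℝ) (f : ℝ × ℝ × ℝ × ℝ → ℝ) (p : ℝ × ℝ × ℝ × ℝ) : ℝ :=
  p.2.1 * fderiv ℝ f p (1, 0, 0, 0)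
          - 1 / (1 - p.1) * ((p.2.2.1) ^ 2 * fderiv ℝ f p (0, 1, 0, 0)
              - p.2.1 * p.2.2.1 * fderiv ℝ f p (0, 0, 1, 0))
          - α / η₁ * p.2.1 * fderiv ℝ f p (0, 0, 1, 0)

lemma stl_slice (g : ℝ × ℝ × ℝ × ℝ → ℝ) (hg : ContDiff ℝ 1 g) (η : ℝ) (v e : ℝ × ℝ × ℝ) :
    fderiv ℝ (fun v => g (η, v)) v e = fderiv ℝ g (η, v) (0, e) := by
  have h1 : HasFDerivAt g (fderiv ℝ g (η, v)) (η, v) :=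
    ((hg.differentiable one_ne_zero) (η, v)).hasFDerivAt
  have h2 := h1.comp v (hasFDerivAt_prodMk_right (𝕜 := ℝ) η v)
  have h3 := h2.fderiv
  simp only [Function.comp_def] at h3
  rw [h3]; simp

lemma stl_slice_eta (g : ℝ × ℝ × ℝ × ℝ → ℝ) (hg : ContDiff ℝ 1 g) (η : ℝ) (v : ℝ × ℝ × ℝ) :
    HasDerivAt (fun η => g (η, v)) (fderiv ℝ g (η, v) (1, 0, 0, 0)) η := by
  have h1 : HasFDerivAt g (fderiv ℝ g (η, v)) (η, v) :=
    ((hg.differentiable one_ne_zero) (η, v)).hasFDerivAt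
  have h2 := (h1.comp η (hasFDerivAt_prodMk_left (𝕜 := ℝ) η v)).hasDerivAt
  simp only [ContinuousLinearMap.comp_apply, ContinuousLinearMap.inl_apply] at h2
  exact h2

lemma stl_int4 (A P1 P2 P3 : ℝ × ℝ × ℝ → ℝ) (hA : Integrable A) (h1 : Integrable P1)
    (h2 : Integrable P2) (h3 : Integrable P3) (z1 : ∫ v, P1 v = 0) (z2 : ∫ v, P2 v = 0)
    (z3 : ∫ v, P3 v = 0) (c1 c2 c3 : ℝ) :
    ∫ v, A v = ∫ v, (A v - c1 * P1 v + c2 * P2 v - c3 * P3 v) := by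
  have k1 : Integrable (fun v => A v - c1 * P1 v) := hA.sub (h1.const_mul _)
  have k2 : Integrable (fun v => A v - c1 * P1 v + c2 * P2 v) := k1.add (h2.const_mul _)
  rw [integral_sub k2 (h3.const_mul _), integral_add k1 (h2.const_mul _),
    integral_sub hA (h1.const_mul _)]
  simp only [integral_const_mul, z1, z2, z3]
  ring

lemma stl_slab (η₁ : ℝ) (hη₁ : 0 < η₁) (hη₁' : η₁ < 1) (α : ℝ) (hα : 0 < α) (hα' : α < 1)
    (χ : ℝ × ℝ × ℝ → ℝ) (hχ : ContDiff ℝ 1 χ) (hχc : HasCompactSupport χ)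
    (a0 a1 M : ℝ) (ha : ∀ η ∈ Ioo 0 η₁, |a0 + a1 * η| ≤ 1)
    (hM0 : ∀ v, |χ v| ≤ M) (hM1 : ∀ v, |χ v * v.1| ≤ M)
    (hM2 : ∀ v, |fderiv ℝ (fun v => χ v * v.2.1 ^ 2) v (1, 0, 0)| ≤ M)
    (hM3 : ∀ v, |fderiv ℝ (fun v => χ v * (v.1 * v.2.1)) v (0, 1, 0)| ≤ M)
    (hM4 : ∀ v, |fderiv ℝ (fun v => χ v * v.1) v (0, 1, 0)| ≤ M)
    (g F G : ℝ × ℝ × ℝ × ℝ → ℝ) (hg : ContDiff ℝ 1 g)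
    (hF : ∀ p, |g p| ≤ F p) (hG : ∀ p, |stlT η₁ α g p| ≤ G p)
    (iF : IntegrableOn F (Set.Ioo (0 : ℝ) η₁ ×ˢ (Set.univ : Set (ℝ × ℝ × ℝ))))
    (iG : IntegrableOn G (Set.Ioo (0 : ℝ) η₁ ×ˢ (Set.univ : Set (ℝ × ℝ × ℝ)))) :
    |(a0 + a1 * η₁) * (∫ v, χ v * v.1 * g (η₁, v)) - a0 * ∫ v, χ v * v.1 * g (0, v)| ≤
      M * (1 + |a1| + 2 / (1 - η₁) + 1 / η₁) *
       ((∫ p in Set.Ioo (0 : ℝ) η₁ ×ˢ (Set.univ : Set (ℝ × ℝ × ℝ)), F p) +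
        ∫ p in Set.Ioo (0 : ℝ) η₁ ×ˢ (Set.univ : Set (ℝ × ℝ × ℝ)), G p) := by
  set K := M * (1 + |a1| + 2 / (1 - η₁) + 1 / η₁) with hK
  have hM : 0 ≤ M := (abs_nonneg _).trans (hM0 0)
  have h1η : 0 < 1 - η₁ := by linarith
  have cd : Continuous fun p => fderiv ℝ g p (1, 0, 0, 0) :=
    (hg.continuous_fderiv one_ne_zero).clm_apply continuous_const
  have cg := hg.continuous
  have cχ := hχ.continuous
  set H : ℝ × ℝ × ℝ × ℝ → ℝ := fun p =>
    χ p.2 * p.2.1 * (a1 * g p + (a0 + a1 * p.1) * fderiv ℝ g p (1, 0, 0, 0)) with hH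
  have cH : Continuous H := by fun_prop
  have hvol : (volume : Measure (ℝ × ℝ × ℝ × ℝ)).restrict
      (Set.Ioo (0 : ℝ) η₁ ×ˢ (Set.univ : Set (ℝ × ℝ × ℝ))) =
      ((volume : Measure ℝ).restrict (Ioo 0 η₁)).prod (volume : Measure (ℝ × ℝ × ℝ)) := by
    rw [Measure.volume_eq_prod, ← Measure.prod_restrict, Measure.restrict_univ]
  have iH : Integrable H (((volume : Measure ℝ).restrict (Ioo 0 η₁)).prod
      (volume : Measure (ℝ × ℝ × ℝ))) := by
    rw [← hvol]
    have hcomp : IsCompact (Icc (0:ℝ) η₁ ×ˢ tsupport χ) := isCompact_Icc.prod hχc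
    have h1 : IntegrableOn H (Icc (0:ℝ) η₁ ×ˢ tsupport χ) :=
      cH.continuousOn.integrableOn_compact hcomp
    have h2 : IntegrableOn H (Icc (0:ℝ) η₁ ×ˢ (univ : Set (ℝ × ℝ × ℝ))) := by
      refine h1.of_forall_sdiff_eq_zero (measurableSet_Icc.prod MeasurableSet.univ) ?_
      rintro ⟨η, v⟩ hp
      have : v ∉ tsupport χ := by
        intro hv
        exact hp.2 ⟨hp.1.1, hv⟩
      simp [hH, image_eq_zero_of_notMem_tsupport this]
    exact h2.mono_set (prod_mono Ioo_subset_Icc_self le_rfl)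
  -- boundary terms
  have ftc : ∀ v : ℝ × ℝ × ℝ, ∫ η in Ioo 0 η₁, H (η, v) =
      (a0 + a1 * η₁) * (χ v * v.1 * g (η₁, v)) - a0 * (χ v * v.1 * g (0, v)) := by
    intro v
    rw [← integral_Ioc_eq_integral_Ioo, ← intervalIntegral.integral_of_le hη₁.le]
    have hd : ∀ η ∈ uIcc 0 η₁, HasDerivAt
        (fun η => χ v * v.1 * ((a0 + a1 * η) * g (η, v))) (H (η, v)) η := by
      intro η _
      have h1 : HasDerivAt (fun η : ℝ => a0 + a1 * η) a1 η := by
        simpa using ((hasDerivAt_id η).const_mul a1).const_add a0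
      have h2 := (h1.mul (stl_slice_eta g hg η v)).const_mul (χ v * v.1)
      exact h2
    rw [intervalIntegral.integral_eq_sub_of_hasDerivAt hd
      (Continuous.intervalIntegrable (by fun_prop) _ _)]
    ring
  have iA : ∀ η : ℝ, Integrable fun v : ℝ × ℝ × ℝ => χ v * v.1 * g (η, v) := by
    intro η
    refine Continuous.integrable_of_hasCompactSupport (by fun_prop) ?_
    exact (hχc.mul_right).mul_right
  have e1 : (a0 + a1 * η₁) * (∫ v, χ v * v.1 * g (η₁, v)) - a0 * ∫ v, χ v * v.1 * g (0, v)
      = ∫ η in Ioo 0 η₁, ∫ v, H (η, v) := by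
    rw [← integral_prod _ iH, integral_prod_symm _ iH]
    simp_rw [ftc]
    rw [integral_sub ((iA _).const_mul _) ((iA _).const_mul _), integral_const_mul,
      integral_const_mul]
  rw [e1]
  have iB : Integrable (fun p => K * (F p + G p)) (((volume : Measure ℝ).restrict (Ioo 0 η₁)).prod
      (volume : Measure (ℝ × ℝ × ℝ))) := by
    rw [← hvol]; exact (Integrable.add iF iG).const_mul _
  have e2 : K * ((∫ p in Set.Ioo (0 : ℝ) η₁ ×ˢ (Set.univ : Set (ℝ × ℝ × ℝ)), F p) +
        ∫ p in Set.Ioo (0 : ℝ) η₁ ×ˢ (Set.univ : Set (ℝ × ℝ × ℝ)), G p) =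
      ∫ η in Ioo 0 η₁, ∫ v, K * (F (η, v) + G (η, v)) := by
    rw [← integral_add iF iG, ← integral_const_mul, hvol, integral_prod _ iB]
  rw [e2, ← Real.norm_eq_abs]
  refine norm_integral_le_of_norm_le iB.integral_prod_left ?_
  filter_upwards [iB.prod_right_ae, ae_restrict_mem measurableSet_Ioo] with η iη hη
  -- slice
  have hgη : ContDiff ℝ 1 (fun v => g (η, v)) := hg.comp (contDiff_const.prodMk contDiff_id)
  obtain ⟨j1, z1⟩ := stl_ibp (fun v => χ v * v.2.1 ^ 2) (fun v => g (η, v))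
    (hχ.mul (by fun_prop)) hχc.mul_right hgη (1, 0, 0)
  obtain ⟨j2, z2⟩ := stl_ibp (fun v => χ v * (v.1 * v.2.1)) (fun v => g (η, v))
    (hχ.mul (by fun_prop)) hχc.mul_right hgη (0, 1, 0)
  obtain ⟨j3, z3⟩ := stl_ibp (fun v => χ v * v.1) (fun v => g (η, v))
    (hχ.mul (by fun_prop)) hχc.mul_right hgη (0, 1, 0)
  simp only [stl_slice g hg] at j1 j2 j3 z1 z2 z3
  have iHη : Integrable fun v => H (η, v) := by
    refine Continuous.integrable_of_hasCompactSupport (by fun_prop) ?_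
    exact (hχc.mul_right).mul_right
  set a := a0 + a1 * η with hadef
  have hη1 : 0 < 1 - η := by linarith [hη.2]
  have e3 : ∫ v, H (η, v) = ∫ v, (H (η, v)
      - a / (1 - η) * ((χ v * v.2.1 ^ 2) * fderiv ℝ g (η, v) (0, 1, 0, 0)
          + fderiv ℝ (fun v => χ v * v.2.1 ^ 2) v (1, 0, 0) * g (η, v))
      + a / (1 - η) * ((χ v * (v.1 * v.2.1)) * fderiv ℝ g (η, v) (0, 0, 1, 0)
          + fderiv ℝ (fun v => χ v * (v.1 * v.2.1)) v (0, 1, 0) * g (η, v))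
      - a * (α / η₁) * ((χ v * v.1) * fderiv ℝ g (η, v) (0, 0, 1, 0)
          + fderiv ℝ (fun v => χ v * v.1) v (0, 1, 0) * g (η, v))) := by
    exact stl_int4 _ _ _ _ iHη j1 j2 j3 z1 z2 z3 _ _ _
  rw [e3]
  refine norm_integral_le_of_norm_le iη (Filter.Eventually.of_forall fun v => ?_)
  have hFv := hF (η, v)
  have hGv := hG (η, v)
  have haη := ha η hη
  have hc : |a / (1 - η)| ≤ 1 / (1 - η₁) := by
    rw [abs_div, abs_of_pos hη1]
    exact div_le_div₀ zero_le_one haη h1η (by linarith [hη.2])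
  have hcα : |a * (α / η₁)| ≤ 1 / η₁ := by
    rw [abs_mul, abs_of_pos (div_pos hα hη₁)]
    calc |a| * (α / η₁) ≤ 1 * (1 / η₁) := by gcongr
      _ = _ := one_mul _
  have hF0 : 0 ≤ F (η, v) := (abs_nonneg _).trans hFv
  have hG0 : 0 ≤ G (η, v) := (abs_nonneg _).trans hGv
  have key : (H (η, v)
      - a / (1 - η) * ((χ v * v.2.1 ^ 2) * fderiv ℝ g (η, v) (0, 1, 0, 0)
          + fderiv ℝ (fun v => χ v * v.2.1 ^ 2) v (1, 0, 0) * g (η, v))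
      + a / (1 - η) * ((χ v * (v.1 * v.2.1)) * fderiv ℝ g (η, v) (0, 0, 1, 0)
          + fderiv ℝ (fun v => χ v * (v.1 * v.2.1)) v (0, 1, 0) * g (η, v))
      - a * (α / η₁) * ((χ v * v.1) * fderiv ℝ g (η, v) (0, 0, 1, 0)
          + fderiv ℝ (fun v => χ v * v.1) v (0, 1, 0) * g (η, v))) =
      a1 * (χ v * v.1) * g (η, v) + a * χ v * stlT η₁ α g (η, v)
      - a / (1 - η) * fderiv ℝ (fun v => χ v * v.2.1 ^ 2) v (1, 0, 0) * g (η, v)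
      + a / (1 - η) * fderiv ℝ (fun v => χ v * (v.1 * v.2.1)) v (0, 1, 0) * g (η, v)
      - a * (α / η₁) * fderiv ℝ (fun v => χ v * v.1) v (0, 1, 0) * g (η, v) := by
    simp only [hH, stlT, ← hadef]
    ring
  rw [key, Real.norm_eq_abs]
  have t1 : |a1 * (χ v * v.1) * g (η, v)| ≤ |a1| * M * F (η, v) := by
    rw [abs_mul, abs_mul]; gcongr; exact hM1 v
  have t2 : |a * χ v * stlT η₁ α g (η, v)| ≤ 1 * M * G (η, v) := by
    rw [abs_mul, abs_mul]; gcongr; exact hM0 v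
  have t3 : |a / (1 - η) * fderiv ℝ (fun v => χ v * v.2.1 ^ 2) v (1, 0, 0) * g (η, v)| ≤
      1 / (1 - η₁) * M * F (η, v) := by
    rw [abs_mul, abs_mul]; gcongr; exact hM2 v
  have t4 : |a / (1 - η) * fderiv ℝ (fun v => χ v * (v.1 * v.2.1)) v (0, 1, 0) * g (η, v)| ≤
      1 / (1 - η₁) * M * F (η, v) := by
    rw [abs_mul, abs_mul]; gcongr; exact hM3 v
  have t5 : |a * (α / η₁) * fderiv ℝ (fun v => χ v * v.1) v (0, 1, 0) * g (η, v)| ≤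
      1 / η₁ * M * F (η, v) := by
    rw [abs_mul, abs_mul]; gcongr; exact hM4 v
  have s1 : 0 ≤ M * F (η, v) := by positivity
  have s2 : 0 ≤ (|a1| + 2 / (1 - η₁) + 1 / η₁) * (M * G (η, v)) := by positivity
  calc _ ≤ |a1| * M * F (η, v) + 1 * M * G (η, v) + 1 / (1 - η₁) * M * F (η, v)
      + 1 / (1 - η₁) * M * F (η, v) + 1 / η₁ * M * F (η, v) := by
        rw [abs_le] at *
        constructor <;> linarith
    _ ≤ |a1| * M * F (η, v) + 1 * M * G (η, v) + 1 / (1 - η₁) * M * F (η, v)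
      + 1 / (1 - η₁) * M * F (η, v) + 1 / η₁ * M * F (η, v) + M * F (η, v) +
        (|a1| + 2 / (1 - η₁) + 1 / η₁) * (M * G (η, v)) := by linarith
    _ = _ := by rw [hK]; ring

lemma stl_trace (η₁ : ℝ) (hη₁ : 0 < η₁) (hη₁' : η₁ < 1)
    (χ : ℝ × ℝ × ℝ → ℝ) (hχ : ContDiff ℝ 1 χ) (hχc : HasCompactSupport χ)
    (a0 a1 : ℝ) (ha : ∀ η ∈ Ioo 0 η₁, |a0 + a1 * η| ≤ 1) :
    ∃ K : ℝ, 0 ≤ K ∧ ∀ α : ℝ, 0 < α → α < 1 → ∀ f : ℝ × ℝ × ℝ × ℝ → ℝ, ContDiff ℝ 1 f →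
      IntegrableOn f (Set.Ioo (0 : ℝ) η₁ ×ˢ (Set.univ : Set (ℝ × ℝ × ℝ))) →
      IntegrableOn (stlT η₁ α f) (Set.Ioo (0 : ℝ) η₁ ×ˢ (Set.univ : Set (ℝ × ℝ × ℝ))) →
    |(a0 + a1 * η₁) * (∫ v, χ v * v.1 * |f (η₁, v)|) - a0 * (∫ v, χ v * v.1 * |f (0, v)|)| ≤
      K * ((∫ p in Set.Ioo (0 : ℝ) η₁ ×ˢ (Set.univ : Set (ℝ × ℝ × ℝ)), |f p|) +
        ∫ p in Set.Ioo (0 : ℝ) η₁ ×ˢ (Set.univ : Set (ℝ × ℝ × ℝ)), |stlT η₁ α f p|) := by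
  have bd : ∀ w : ℝ × ℝ × ℝ → ℝ, ContDiff ℝ 1 w → HasCompactSupport w → ∀ e, ∃ C, ∀ v,
      |fderiv ℝ w v e| ≤ C := by
    intro w hw hc e
    have cw : Continuous fun v => fderiv ℝ w v e :=
      (hw.continuous_fderiv one_ne_zero).clm_apply continuous_const
    have hcw : HasCompactSupport fun v => fderiv ℝ w v e := hc.fderiv_apply (𝕜 := ℝ) e
    exact hcw.exists_bound_of_continuous cw
  have cχ := hχ.continuous
  obtain ⟨C0, h0⟩ := hχc.exists_bound_of_continuous cχ
  have hsup1 : HasCompactSupport fun v : ℝ × ℝ × ℝ => χ v * v.1 := hχc.mul_right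
  obtain ⟨C1, h1⟩ := hsup1.exists_bound_of_continuous (by fun_prop)
  obtain ⟨C2, h2⟩ := bd (fun v => χ v * v.2.1 ^ 2) (hχ.mul (by fun_prop)) hχc.mul_right (1, 0, 0)
  obtain ⟨C3, h3⟩ := bd (fun v => χ v * (v.1 * v.2.1)) (hχ.mul (by fun_prop))
    hχc.mul_right (0, 1, 0)
  obtain ⟨C4, h4⟩ := bd (fun v => χ v * v.1) (hχ.mul (by fun_prop)) hχc.mul_right (0, 1, 0)
  set M := |C0| + |C1| + |C2| + |C3| + |C4| with hM
  have := abs_nonneg C0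
  have := abs_nonneg C1
  have := abs_nonneg C2
  have := abs_nonneg C3
  have := abs_nonneg C4
  have h1η : 0 < 1 - η₁ := by linarith
  refine ⟨M * (1 + |a1| + 2 / (1 - η₁) + 1 / η₁), by positivity, ?_⟩
  intro α hα hα' f hf iF iT
  have cf := hf.continuous
  set K := M * (1 + |a1| + 2 / (1 - η₁) + 1 / η₁) with hK
  have main : ∀ ε : ℝ, 0 < ε →
      |(a0 + a1 * η₁) * (∫ v, χ v * v.1 * (Real.sqrt (f (η₁, v) ^ 2 + ε ^ 2) - ε))
        - a0 * ∫ v, χ v * v.1 * (Real.sqrt (f (0, v) ^ 2 + ε ^ 2) - ε)| ≤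
      K * ((∫ p in Set.Ioo (0 : ℝ) η₁ ×ˢ (Set.univ : Set (ℝ × ℝ × ℝ)), |f p|) +
        ∫ p in Set.Ioo (0 : ℝ) η₁ ×ˢ (Set.univ : Set (ℝ × ℝ × ℝ)), |stlT η₁ α f p|) := by
    intro ε hε
    have hpos : ∀ p, 0 < f p ^ 2 + ε ^ 2 := fun p => by positivity
    refine stl_slab η₁ hη₁ hη₁' α hα hα' χ hχ hχc a0 a1 M ha
      (fun v => (h0 v).trans (by linarith [le_abs_self C0]))
      (fun v => (h1 v).trans (by linarith [le_abs_self C1]))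
      (fun v => (h2 v).trans (by linarith [le_abs_self C2]))
      (fun v => (h3 v).trans (by linarith [le_abs_self C3]))
      (fun v => (h4 v).trans (by linarith [le_abs_self C4]))
      (fun p => Real.sqrt (f p ^ 2 + ε ^ 2) - ε) (fun p => |f p|) (fun p => |stlT η₁ α f p|)
      ?_ ?_ ?_ iF.abs iT.abs
    · exact (((hf.pow 2).add contDiff_const).sqrt (fun p => (hpos p).ne')).sub contDiff_const
    · intro p
      rw [abs_le]
      have q1 : ε ≤ Real.sqrt (f p ^ 2 + ε ^ 2) := Real.le_sqrt_of_sq_le (by nlinarith [sq_nonneg (f p)])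
      have q2 : Real.sqrt (f p ^ 2 + ε ^ 2) ≤ |f p| + ε := by
        rw [Real.sqrt_le_left (by positivity), ← sq_abs (f p)]
        nlinarith [mul_nonneg (abs_nonneg (f p)) hε.le]
      constructor <;> linarith [abs_nonneg (f p)]
    · intro p
      have hd : HasFDerivAt f (fderiv ℝ f p) p := ((hf.differentiable one_ne_zero) p).hasFDerivAt
      have hd2 := (((hd.pow 2).add_const (ε ^ 2)).sqrt (hpos p).ne').sub_const ε
      have hs : 0 < Real.sqrt (f p ^ 2 + ε ^ 2) := Real.sqrt_pos.2 (hpos p)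
      have e : ∀ u, fderiv ℝ (fun p => Real.sqrt (f p ^ 2 + ε ^ 2) - ε) p u =
          f p / Real.sqrt (f p ^ 2 + ε ^ 2) * fderiv ℝ f p u := by
        intro u
        rw [hd2.fderiv]
        simp
        field_simp
      have e' : stlT η₁ α (fun p => Real.sqrt (f p ^ 2 + ε ^ 2) - ε) p =
          f p / Real.sqrt (f p ^ 2 + ε ^ 2) * stlT η₁ α f p := by
        simp only [stlT, e]; ring
      rw [e', abs_mul]
      have : |f p / Real.sqrt (f p ^ 2 + ε ^ 2)| ≤ 1 := by
        rw [abs_div, abs_of_pos hs, div_le_one hs]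
        apply Real.le_sqrt_of_sq_le
        rw [sq_abs]; nlinarith
      calc _ ≤ 1 * |stlT η₁ α f p| := by gcongr
        _ = _ := one_mul _
  -- pass to the limit
  set R := K * ((∫ p in Set.Ioo (0 : ℝ) η₁ ×ˢ (Set.univ : Set (ℝ × ℝ × ℝ)), |f p|) +
        ∫ p in Set.Ioo (0 : ℝ) η₁ ×ˢ (Set.univ : Set (ℝ × ℝ × ℝ)), |stlT η₁ α f p|)
  set J := ∫ v : ℝ × ℝ × ℝ, |χ v * v.1|
  have iχ : Integrable (fun v : ℝ × ℝ × ℝ => χ v * v.1) :=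
    Continuous.integrable_of_hasCompactSupport (by fun_prop) hsup1
  have hJ : 0 ≤ J := integral_nonneg fun v => abs_nonneg _
  have close : ∀ ε : ℝ, 0 < ε → ∀ η : ℝ, |(∫ v, χ v * v.1 * |f (η, v)|) -
      ∫ v, χ v * v.1 * (Real.sqrt (f (η, v) ^ 2 + ε ^ 2) - ε)| ≤ ε * J := by
    intro ε hε η
    have i1 : Integrable fun v : ℝ × ℝ × ℝ => χ v * v.1 * |f (η, v)| :=
      Continuous.integrable_of_hasCompactSupport (by fun_prop) hsup1.mul_right
    have i2 : Integrable fun v : ℝ × ℝ × ℝ =>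
        χ v * v.1 * (Real.sqrt (f (η, v) ^ 2 + ε ^ 2) - ε) :=
      Continuous.integrable_of_hasCompactSupport (by fun_prop) hsup1.mul_right
    rw [← integral_sub i1 i2, ← integral_const_mul, ← Real.norm_eq_abs]
    refine norm_integral_le_of_norm_le (iχ.abs.const_mul ε) (Filter.Eventually.of_forall fun v => ?_)
    rw [← mul_sub, Real.norm_eq_abs, abs_mul, mul_comm ε]
    gcongr
    set x := f (η, v)
    have q1 : |x| ≤ Real.sqrt (x ^ 2 + ε ^ 2) := by
      apply Real.le_sqrt_of_sq_le
      rw [sq_abs]; nlinarith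
    have q2 : Real.sqrt (x ^ 2 + ε ^ 2) ≤ |x| + ε := by
      rw [Real.sqrt_le_left (by positivity), ← sq_abs x]
      nlinarith [mul_nonneg (abs_nonneg x) hε.le]
    rw [abs_le]; constructor <;> linarith
  refine le_of_forall_pos_le_add fun δ hδ => ?_
  set L := (|a0 + a1 * η₁| + |a0|) * J with hL
  have hL0 : 0 ≤ L := by positivity
  obtain ⟨ε, hε, hεL⟩ : ∃ ε : ℝ, 0 < ε ∧ ε * L ≤ δ := by
    refine ⟨δ / (L + 1), by positivity, ?_⟩
    rw [div_mul_eq_mul_div, div_le_iff₀ (by positivity)]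
    nlinarith
  have m := main ε hε
  have c1 := close ε hε η₁
  have c2 := close ε hε 0
  set A := ∫ v, χ v * v.1 * |f (η₁, v)|
  set B := ∫ v, χ v * v.1 * |f (0, v)|
  set A' := ∫ v, χ v * v.1 * (Real.sqrt (f (η₁, v) ^ 2 + ε ^ 2) - ε)
  set B' := ∫ v, χ v * v.1 * (Real.sqrt (f (0, v) ^ 2 + ε ^ 2) - ε)
  calc |(a0 + a1 * η₁) * A - a0 * B|
      = |((a0 + a1 * η₁) * A' - a0 * B') + ((a0 + a1 * η₁) * (A - A') - a0 * (B - B'))| := by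
        congr 1; ring
    _ ≤ |(a0 + a1 * η₁) * A' - a0 * B'| + |(a0 + a1 * η₁) * (A - A') - a0 * (B - B')| :=
        abs_add_le _ _
    _ ≤ R + (|(a0 + a1 * η₁) * (A - A')| + |a0 * (B - B')|) := add_le_add m (abs_sub _ _)
    _ ≤ R + (|a0 + a1 * η₁| * (ε * J) + |a0| * (ε * J)) := by
        rw [abs_mul, abs_mul]; gcongr
    _ = R + ε * L := by rw [hL]; ring
    _ ≤ R + δ := by linarith

lemma stl_cutoff (τ σ : ℝ) (hτ : 0 < τ) : ∃ χ : ℝ × ℝ × ℝ → ℝ, ContDiff ℝ 1 χ ∧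
    HasCompactSupport χ ∧ (∀ v, 0 ≤ χ v * (σ * v.1)) ∧
    ∀ v : ℝ × ℝ × ℝ, τ ≤ σ * v.1 → Real.sqrt (v.1 ^ 2 + v.2.1 ^ 2 + v.2.2 ^ 2) ≤ 1 / τ →
      χ v = 1 := by
  refine ⟨fun v => Real.smoothTransition (σ * v.1 / τ) * Real.smoothTransition
    ((1 / τ) ^ 2 + 1 - (v.1 ^ 2 + v.2.1 ^ 2 + v.2.2 ^ 2)), ?_, ?_, ?_, ?_⟩
  · have h : ContDiff ℝ 1 Real.smoothTransition := Real.smoothTransition.contDiff (n := 1)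
    exact (h.comp (by fun_prop)).mul (h.comp (by fun_prop))
  · set r := (1 / τ) ^ 2 + 1 with hr
    have hr0 : 1 ≤ r := by rw [hr]; nlinarith [sq_nonneg (1 / τ)]
    refine HasCompactSupport.of_support_subset_isCompact
      (K := Icc (-r) r ×ˢ Icc (-r) r ×ˢ Icc (-r) r)
      (isCompact_Icc.prod (isCompact_Icc.prod isCompact_Icc)) ?_
    intro v hv
    have h1 : v.1 ^ 2 + v.2.1 ^ 2 + v.2.2 ^ 2 < r := by
      by_contra hcon
      apply hv
      have : Real.smoothTransition (r - (v.1 ^ 2 + v.2.1 ^ 2 + v.2.2 ^ 2)) = 0 :=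
        Real.smoothTransition.zero_of_nonpos (by linarith)
      simp only [this, mul_zero]
    have aux : ∀ x : ℝ, x ^ 2 ≤ r → x ∈ Icc (-r) r := by
      intro x hx
      exact abs_le.1 (abs_le_of_sq_le_sq (by nlinarith) (by linarith))
    exact ⟨aux _ (by nlinarith [sq_nonneg v.2.1, sq_nonneg v.2.2]),
      aux _ (by nlinarith [sq_nonneg v.1, sq_nonneg v.2.2]),
      aux _ (by nlinarith [sq_nonneg v.2.1, sq_nonneg v.1])⟩
  · intro v
    rcases le_total (σ * v.1) 0 with h | h
    · have : Real.smoothTransition (σ * v.1 / τ) = 0 :=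
        Real.smoothTransition.zero_of_nonpos (div_nonpos_of_nonpos_of_nonneg h hτ.le)
      simp [this]
    · exact mul_nonneg (mul_nonneg (Real.smoothTransition.nonneg _)
        (Real.smoothTransition.nonneg _)) h
  · intro v h1 h2
    have h3 := (Real.sqrt_le_left (by positivity)).1 h2
    simp only
    rw [Real.smoothTransition.one_of_one_le ((one_le_div hτ).2 h1),
      Real.smoothTransition.one_of_one_le (by linarith), one_mul]

lemma stl_set (τ σ : ℝ) (hσ : |σ| = 1) (χ : ℝ × ℝ × ℝ → ℝ) (hχ : ContDiff ℝ 1 χ)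
    (hχc : HasCompactSupport χ) (h0 : ∀ v, 0 ≤ χ v * (σ * v.1)) (hτ : 0 < τ)
    (h1 : ∀ v : ℝ × ℝ × ℝ, τ ≤ σ * v.1 →
      Real.sqrt (v.1 ^ 2 + v.2.1 ^ 2 + v.2.2 ^ 2) ≤ 1 / τ → χ v = 1)
    (S : Set (ℝ × ℝ × ℝ)) (hSm : MeasurableSet S) (hS : ∀ v ∈ S, τ ≤ σ * v.1 ∧
      Real.sqrt (v.1 ^ 2 + v.2.1 ^ 2 + v.2.2 ^ 2) ≤ 1 / τ)
    (u : ℝ × ℝ × ℝ → ℝ) (hu : Continuous u) :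
    ∫ v in S, |u v| * |v.1| ≤ σ * ∫ v, χ v * v.1 * |u v| := by
  have cχ := hχ.continuous
  have i : Integrable fun v => σ * (χ v * v.1 * |u v|) := by
    refine Integrable.const_mul ?_ _
    exact Continuous.integrable_of_hasCompactSupport (by fun_prop) (hχc.mul_right.mul_right)
  rw [← integral_const_mul]
  calc ∫ v in S, |u v| * |v.1| = ∫ v in S, σ * (χ v * v.1 * |u v|) := by
        refine setIntegral_congr_fun hSm fun v hv => ?_
        obtain ⟨h2, h3⟩ := hS v hv
        have : |v.1| = σ * v.1 := by
          rw [← abs_of_pos (hτ.trans_le h2), abs_mul, hσ, one_mul]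
        simp only [h1 v h2 h3, this]; ring
    _ ≤ _ := by
        refine setIntegral_le_integral i (Filter.Eventually.of_forall fun v => ?_)
        have := mul_nonneg (h0 v) (abs_nonneg (u v))
        simp only [Pi.zero_apply]
        linarith


/-- **Steady trace lemma.** For the Taylor–Couette transport operator
`Tf = v_η ∂_η f − (1/(1−η))(v_φ² ∂_{v_η} f − v_η v_φ ∂_{v_φ} f) − (α/η₁) v_η ∂_{v_φ} f`
on the channel `(0,η₁) × ℝ³` (phase point `p = (η, v_η, v_φ, v_z)`), the outgoing
boundary trace away from grazing velocities is controlled by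
`‖f‖_{L¹} + ‖Tf‖_{L¹}`. -/
theorem steady_trace_lemma
    (η₁ : ℝ) (hη₁ : 0 < η₁) (hη₁' : η₁ < 1)
    (τ : ℝ) (hτ : 0 < τ) (hτ' : τ < 1) :
    ∃ α₀, 0 < α₀ ∧ α₀ < 1 ∧ ∃ C > 0, ∀ α : ℝ, 0 < α → α < α₀ →
      ∀ f : ℝ × ℝ × ℝ × ℝ → ℝ, ContDiff ℝ 1 f →
      ∀ Tf : ℝ × ℝ × ℝ × ℝ → ℝ,
      (Tf = fun p => p.2.1 * fderiv ℝ f p (1, 0, 0, 0)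
          - 1 / (1 - p.1) * ((p.2.2.1) ^ 2 * fderiv ℝ f p (0, 1, 0, 0)
              - p.2.1 * p.2.2.1 * fderiv ℝ f p (0, 0, 1, 0))
          - α / η₁ * p.2.1 * fderiv ℝ f p (0, 0, 1, 0)) →
      IntegrableOn f (Set.Ioo (0 : ℝ) η₁ ×ˢ (Set.univ : Set (ℝ × ℝ × ℝ))) →
      IntegrableOn Tf (Set.Ioo (0 : ℝ) η₁ ×ˢ (Set.univ : Set (ℝ × ℝ × ℝ))) →
      (∫ v in {v : ℝ × ℝ × ℝ | τ ≤ v.1 ∧ τ ≤ |v.2.1| ∧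
            Real.sqrt (v.1 ^ 2 + v.2.1 ^ 2 + v.2.2 ^ 2) ≤ 1 / τ},
          |f (η₁, v)| * |v.1|)
        + (∫ v in {v : ℝ × ℝ × ℝ | v.1 ≤ -τ ∧ τ ≤ |v.2.1| ∧
            Real.sqrt (v.1 ^ 2 + v.2.1 ^ 2 + v.2.2 ^ 2) ≤ 1 / τ},
          |f (0, v)| * |v.1|)
      ≤ C * ((∫ p in Set.Ioo (0 : ℝ) η₁ ×ˢ (Set.univ : Set (ℝ × ℝ × ℝ)), |f p|)
           + (∫ p in Set.Ioo (0 : ℝ) η₁ ×ˢ (Set.univ : Set (ℝ × ℝ × ℝ)), |Tf p|)) := by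
  obtain ⟨χ, p1, p2, p3, p4⟩ := stl_cutoff τ 1 hτ
  obtain ⟨ξ, q1, q2, q3, q4⟩ := stl_cutoff τ (-1) hτ
  obtain ⟨K, hK, HK⟩ := stl_trace η₁ hη₁ hη₁' χ p1 p2 0 (1 / η₁) (by
    intro η hη
    rw [zero_add, one_div_mul_eq_div, abs_of_pos (div_pos hη.1 hη₁), div_le_one hη₁]
    exact hη.2.le)
  obtain ⟨L, hL, HL⟩ := stl_trace η₁ hη₁ hη₁' ξ q1 q2 1 (-(1 / η₁)) (by
    intro η hη
    have h1 : 1 / η₁ * η ≤ 1 := by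
      rw [one_div_mul_eq_div, div_le_one hη₁]; exact hη.2.le
    have h2 : 0 ≤ 1 / η₁ * η := mul_nonneg (by positivity) hη.1.le
    rw [abs_le]; constructor <;> linarith)
  refine ⟨1 / 2, by norm_num, by norm_num, K + L + 1, by positivity, ?_⟩
  intro α hα hα' f hf Tf hTf iF iT
  have hT : Tf = stlT η₁ α f := hTf
  subst hT
  have A := HK α hα (by linarith) f hf iF iT
  have B := HL α hα (by linarith) f hf iF iT
  have cf := hf.continuous
  have m1 : MeasurableSet {v : ℝ × ℝ × ℝ | τ ≤ v.1 ∧ τ ≤ |v.2.1| ∧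
            Real.sqrt (v.1 ^ 2 + v.2.1 ^ 2 + v.2.2 ^ 2) ≤ 1 / τ} := by
    apply IsClosed.measurableSet
    simp only [setOf_and]
    exact (isClosed_le (by fun_prop) (by fun_prop)).inter
      ((isClosed_le (by fun_prop) (by fun_prop)).inter (isClosed_le (by fun_prop) (by fun_prop)))
  have m2 : MeasurableSet {v : ℝ × ℝ × ℝ | v.1 ≤ -τ ∧ τ ≤ |v.2.1| ∧
            Real.sqrt (v.1 ^ 2 + v.2.1 ^ 2 + v.2.2 ^ 2) ≤ 1 / τ} := by
    apply IsClosed.measurableSet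
    simp only [setOf_and]
    exact (isClosed_le (by fun_prop) (by fun_prop)).inter
      ((isClosed_le (by fun_prop) (by fun_prop)).inter (isClosed_le (by fun_prop) (by fun_prop)))
  have B1 := stl_set τ 1 (by simp) χ p1 p2 p3 hτ p4 _ m1
    (fun v hv => ⟨by linarith [hv.1], hv.2.2⟩) (fun v => f (η₁, v)) (by fun_prop)
  have B2 := stl_set τ (-1) (by simp) ξ q1 q2 q3 hτ q4 _ m2
    (fun v hv => ⟨by linarith [hv.1], hv.2.2⟩) (fun v => f (0, v)) (by fun_prop)
  have e : 1 / η₁ * η₁ = 1 := by field_simp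
  have A' := (le_abs_self _).trans A
  have B' := (le_abs_self _).trans B
  simp only [neg_mul, e] at A' B' B2
  have n1 : 0 ≤ ∫ p in Set.Ioo (0 : ℝ) η₁ ×ˢ (Set.univ : Set (ℝ × ℝ × ℝ)), |f p| :=
    integral_nonneg fun _ => abs_nonneg _
  have n2 : 0 ≤ ∫ p in Set.Ioo (0 : ℝ) η₁ ×ˢ (Set.univ : Set (ℝ × ℝ × ℝ)), |stlT η₁ α f p| :=
    integral_nonneg fun _ => abs_nonneg _
  linarith
end

section
/- Fix η₁ ∈ (0,1). For every τ ∈ (0,1) there exist α₀ ∈ (0,1) and a constant C_τ > 0 such that for every α ∈ (0, α₀), every T > 0, and every continuously differentiable function f : [0,T] × [0,η₁] × ℝ³ → ℝ with all quantities below finite, one has ∫_0^T [ ∫_{{v : v_η ≥ τ, |v_φ| ≥ τ, |v| ≤ 1/τ}} |f(t, η₁, v)|·|v_η| dv + ∫_{{v : v_η ≤ −τ, |v_φ| ≥ τ, |v| ≤ 1/τ}} |f(t, 0, v)|·|v_η| dv ] dt ≤ C_τ·( ‖f(0)‖_{L¹} + ∫_0^T ‖f(t)‖_{L¹} dt + ∫_0^T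 ‖(∂_t f + T f)(t)‖_{L¹} dt ), where Tf := v_η·∂_η f − (1/(1−η))·( v_φ²·∂_{v_η} f − v_η v_φ·∂_{v_φ} f ) − (α/η₁)·v_η·∂_{v_φ} f and all L¹ norms are over (0,η₁) × ℝ³. -/
open MeasureTheory Set

lemma ut_intOn {X : Type*} [TopologicalSpace X] [MeasurableSpace X] [OpensMeasurableSpace X]
    [T2Space X] [TopologicalSpace.PseudoMetrizableSpace X]
    (μ : Measure X) [IsFiniteMeasureOnCompacts μ] (F : X → ℝ) (hF : Continuous F)
    (S C : Set X) (hS : MeasurableSet S) (hC : IsCompact C) (h : ∀ p ∈ S, p ∉ C → F p = 0) :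
    IntegrableOn F S μ := by
  have h1 : IntegrableOn F C μ := hF.continuousOn.integrableOn_compact hC
  exact h1.of_forall_sdiff_eq_zero hS (fun p hp => h p hp.1 hp.2)

lemma ut_intV (F : ℝ × ℝ × ℝ → ℝ) (hF : Continuous F) (K : Set (ℝ × ℝ × ℝ)) (hK : IsCompact K)
    (h : ∀ v, v ∉ K → F v = 0) : Integrable F := by
  rw [← integrableOn_univ]
  exact ut_intOn _ F hF univ K MeasurableSet.univ hK (fun p _ => h p)

lemma ut_intQ (a : ℝ) (F : ℝ × ℝ × ℝ × ℝ → ℝ) (hF : Continuous F) (K : Set (ℝ × ℝ × ℝ))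
    (hK : IsCompact K) (h : ∀ η v, v ∉ K → F (η, v) = 0) :
    IntegrableOn F (Ioo (0:ℝ) a ×ˢ (univ : Set (ℝ × ℝ × ℝ))) := by
  refine ut_intOn _ F hF _ (Icc 0 a ×ˢ K) (measurableSet_Ioo.prod MeasurableSet.univ)
    (isCompact_Icc.prod hK) ?_
  rintro ⟨η, v⟩ hp hn
  apply h
  intro hv
  exact hn ⟨Ioo_subset_Icc_self hp.1, hv⟩

lemma ut_intP (T a : ℝ) (F : ℝ × ℝ × ℝ × ℝ × ℝ → ℝ) (hF : Continuous F) (K : Set (ℝ × ℝ × ℝ))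
    (hK : IsCompact K) (h : ∀ t η v, v ∉ K → F (t, η, v) = 0) :
    IntegrableOn F (Ioo (0:ℝ) T ×ˢ (Ioo (0:ℝ) a ×ˢ (univ : Set (ℝ × ℝ × ℝ)))) := by
  refine ut_intOn _ F hF _ (Icc 0 T ×ˢ (Icc 0 a ×ˢ K))
    (measurableSet_Ioo.prod (measurableSet_Ioo.prod MeasurableSet.univ))
    (isCompact_Icc.prod (isCompact_Icc.prod hK)) ?_
  rintro ⟨t, η, v⟩ hp hn
  apply h
  intro hv
  exact hn ⟨Ioo_subset_Icc_self hp.1, Ioo_subset_Icc_self hp.2.1, hv⟩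

lemma ut_fub {X Y : Type*} [MeasureSpace X] [MeasureSpace Y]
    [SFinite (volume : Measure X)] [SFinite (volume : Measure Y)]
    (F : X × Y → ℝ) (A : Set X) (B : Set Y) (h : IntegrableOn F (A ×ˢ B)) :
    Integrable (fun t => ∫ q in B, F (t, q)) (volume.restrict A) := by
  rw [IntegrableOn, Measure.volume_eq_prod, ← Measure.prod_restrict] at h
  exact h.integral_prod_left

lemma ut_swap {X Y : Type*} [MeasureSpace X] [MeasureSpace Y]
    [SFinite (volume : Measure X)] [SFinite (volume : Measure Y)]
    (F : X × Y → ℝ) (A : Set X) (B : Set Y) (h : IntegrableOn F (A ×ˢ B)) :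
    ∫ t in A, ∫ q in B, F (t, q) = ∫ q in B, ∫ t in A, F (t, q) := by
  rw [IntegrableOn, Measure.volume_eq_prod, ← Measure.prod_restrict] at h
  exact integral_integral_swap (f := fun t q => F (t, q)) h

/-- integration by parts in velocity -/
lemma ut_ibp (h w : ℝ × ℝ × ℝ → ℝ) (hh : ContDiff ℝ 1 h) (hw : ContDiff ℝ 1 w)
    (K : Set (ℝ × ℝ × ℝ)) (hK : IsCompact K) (h0 : ∀ v, v ∉ K → w v = 0)
    (h0' : ∀ v, v ∉ K → fderiv ℝ w v = 0) (e : ℝ × ℝ × ℝ) :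
    ∫ v, h v * fderiv ℝ w v e = - ∫ v, fderiv ℝ h v e * w v := by
  have c1 : Continuous (fderiv ℝ h) := hh.continuous_fderiv (by norm_num)
  have c2 : Continuous (fderiv ℝ w) := hw.continuous_fderiv (by norm_num)
  have c3 := hh.continuous
  have c4 := hw.continuous
  have i1 : (volume : Measure (ℝ × ℝ)).IsAddHaarMeasure :=
    Measure.prod.instIsAddHaarMeasure (volume : Measure ℝ) (volume : Measure ℝ)
  have i2 : (volume : Measure (ℝ × ℝ × ℝ)).IsAddHaarMeasure :=
    Measure.prod.instIsAddHaarMeasure (volume : Measure ℝ) (volume : Measure (ℝ × ℝ))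
  apply integral_mul_fderiv_eq_neg_fderiv_mul_of_integrable
  · exact ut_intV _ (by fun_prop) K hK (fun v hv => by simp [h0 v hv])
  · exact ut_intV _ (by fun_prop) K hK (fun v hv => by simp [h0' v hv])
  · exact ut_intV _ (by fun_prop) K hK (fun v hv => by simp [h0 v hv])
  · intro x _; exact hh.differentiable (by norm_num) x
  · intro x _; exact hw.differentiable (by norm_num) x

lemma ut_ftc (F F' : ℝ → ℝ) (a : ℝ) (ha : 0 < a) (hF : ∀ x, HasDerivAt F (F' x) x)
    (hc : Continuous F') : ∫ x in Ioo 0 a, F' x = F a - F 0 := by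
  rw [← integral_Ioc_eq_integral_Ioo, ← intervalIntegral.integral_of_le ha.le]
  exact intervalIntegral.integral_eq_sub_of_hasDerivAt (fun x _ => hF x)
    (hc.intervalIntegrable _ _)

lemma ut_div (η₁ T a : ℝ) (hη : 0 < η₁) (hT : 0 < T) (k : ℝ → ℝ) (hk : Continuous k)
    (K : Set (ℝ × ℝ × ℝ)) (hK : IsCompact K) (w : ℝ × ℝ × ℝ × ℝ × ℝ → ℝ)
    (hw : ContDiff ℝ 1 w) (hw0 : ∀ t η v, v ∉ K → w (t, η, v) = 0) :
    ∫ t in Ioo 0 T, ∫ q in Ioo 0 η₁ ×ˢ (univ : Set (ℝ × ℝ × ℝ)),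
      (fderiv ℝ w (t, q) (1, q.2.1, - k q.1 * q.2.2.1 ^ 2,
          k q.1 * q.2.1 * q.2.2.1 - a * q.2.1, 0) + k q.1 * q.2.1 * w (t, q))
    = (∫ q in Ioo 0 η₁ ×ˢ (univ : Set (ℝ × ℝ × ℝ)), w (T, q))
      - (∫ q in Ioo 0 η₁ ×ˢ (univ : Set (ℝ × ℝ × ℝ)), w (0, q))
      + ∫ t in Ioo 0 T, ∫ v, v.1 * (w (t, η₁, v) - w (t, 0, v)) := by
  have cw := hw.continuous
  have cw' : Continuous (fderiv ℝ w) := hw.continuous_fderiv (by norm_num)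
  have dw : ∀ p, HasFDerivAt w (fderiv ℝ w p) p :=
    fun p => (hw.differentiable (by norm_num) p).hasFDerivAt
  have hw1 : ∀ t η v, v ∉ K → fderiv ℝ w (t, η, v) = 0 := by
    intro t η v hv
    have : w =ᶠ[nhds (t, η, v)] (fun _ => 0) := by
      have ho : IsOpen {p : ℝ × ℝ × ℝ × ℝ × ℝ | p.2.2 ∉ K} :=
        hK.isClosed.isOpen_compl.preimage (by fun_prop)
      filter_upwards [ho.mem_nhds (show (t, η, v) ∈ {p : ℝ × ℝ × ℝ × ℝ × ℝ | p.2.2 ∉ K} from hv)]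
        with p hp
      exact hw0 p.1 p.2.1 p.2.2 hp
    rw [this.fderiv_eq]; simp
  set Q : Set (ℝ × ℝ × ℝ × ℝ) := Ioo 0 η₁ ×ˢ (univ : Set (ℝ × ℝ × ℝ)) with hQ
  let G1 : ℝ × ℝ × ℝ × ℝ × ℝ → ℝ := fun p => fderiv ℝ w p (1, 0, 0, 0, 0)
  let G2 : ℝ × ℝ × ℝ × ℝ × ℝ → ℝ := fun p => p.2.2.1 * fderiv ℝ w p (0, 1, 0, 0, 0)
  let G3 : ℝ × ℝ × ℝ × ℝ × ℝ → ℝ := fun p =>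
    (- k p.2.1 * p.2.2.2.1 ^ 2) * fderiv ℝ w p (0, 0, 1, 0, 0)
    + (k p.2.1 * p.2.2.1 * p.2.2.2.1 - a * p.2.2.1) * fderiv ℝ w p (0, 0, 0, 1, 0)
    + k p.2.1 * p.2.2.1 * w p
  have cG1 : Continuous G1 := by fun_prop
  have cG2 : Continuous G2 := by fun_prop
  have cG3 : Continuous G3 := by fun_prop
  have zG1 : ∀ t η v, v ∉ K → G1 (t, η, v) = 0 := fun t η v hv => by simp [G1, hw1 t η v hv]
  have zG2 : ∀ t η v, v ∉ K → G2 (t, η, v) = 0 := fun t η v hv => by simp [G2, hw1 t η v hv]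
  have zG3 : ∀ t η v, v ∉ K → G3 (t, η, v) = 0 := fun t η v hv => by
    simp [G3, hw1 t η v hv, hw0 t η v hv]
  have iG1 := ut_intP T η₁ G1 cG1 K hK zG1
  have iG2 := ut_intP T η₁ G2 cG2 K hK zG2
  have jG1 : ∀ t, IntegrableOn (fun q => G1 (t, q)) Q := fun t =>
    ut_intQ η₁ _ (by fun_prop) K hK (zG1 t)
  have jG2 : ∀ t, IntegrableOn (fun q => G2 (t, q)) Q := fun t =>
    ut_intQ η₁ _ (by fun_prop) K hK (zG2 t)
  have jG3 : ∀ t, IntegrableOn (fun q => G3 (t, q)) Q := fun t =>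
    ut_intQ η₁ _ (by fun_prop) K hK (zG3 t)
  -- decomposition
  have hdec : ∀ t (q : ℝ × ℝ × ℝ × ℝ), fderiv ℝ w (t, q) (1, q.2.1, - k q.1 * q.2.2.1 ^ 2,
          k q.1 * q.2.1 * q.2.2.1 - a * q.2.1, 0) + k q.1 * q.2.1 * w (t, q)
        = G1 (t, q) + G2 (t, q) + G3 (t, q) := by
    intro t q
    have : ((1, q.2.1, - k q.1 * q.2.2.1 ^ 2,
          k q.1 * q.2.1 * q.2.2.1 - a * q.2.1, 0) : ℝ × ℝ × ℝ × ℝ × ℝ)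
        = (1, 0, 0, 0, 0) + q.2.1 • (0, 1, 0, 0, 0) + (- k q.1 * q.2.2.1 ^ 2) • (0, 0, 1, 0, 0)
          + (k q.1 * q.2.1 * q.2.2.1 - a * q.2.1) • (0, 0, 0, 1, 0) := by
      ext <;> simp
    rw [this]
    simp only [map_add, map_smul, smul_eq_mul, G1, G2, G3]
    ring
  simp_rw [hdec]
  -- G3 vanishes
  have hG3 : ∀ t, ∫ q in Q, G3 (t, q) = 0 := by
    intro t
    have h1 := jG3 t
    rw [hQ, Measure.volume_eq_prod, setIntegral_prod _ h1]
    have : ∀ η, ∫ v in (univ : Set (ℝ × ℝ × ℝ)), G3 (t, η, v) = 0 := by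
      intro η
      rw [setIntegral_univ]
      let s : ℝ × ℝ × ℝ → ℝ := fun v => w (t, η, v)
      have hs : ContDiff ℝ 1 s := by
        apply hw.comp; fun_prop
      have hs' : ∀ v e, fderiv ℝ s v e = fderiv ℝ w (t, η, v) (0, 0, e) := by
        intro v e
        have h2 : HasFDerivAt (fun v : ℝ × ℝ × ℝ => ((t, η, v) : ℝ × ℝ × ℝ × ℝ × ℝ))
            ((0 : (ℝ × ℝ × ℝ) →L[ℝ] ℝ).prod ((0 : (ℝ × ℝ × ℝ) →L[ℝ] ℝ).prod
              (ContinuousLinearMap.id ℝ (ℝ × ℝ × ℝ)))) v :=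
          (hasFDerivAt_const t v).prodMk ((hasFDerivAt_const η v).prodMk (hasFDerivAt_id v))
        have h3 := (dw (t, η, v)).comp v h2
        have h4 : fderiv ℝ s v = _ := h3.fderiv
        rw [h4]; simp
      have z0 : ∀ v, v ∉ K → s v = 0 := fun v hv => hw0 t η v hv
      have z1 : ∀ v, v ∉ K → fderiv ℝ s v = 0 := fun v hv => by
        ext1 <;> (ext <;> simp [hs', hw1 t η v hv])
      have cs := hs.continuous
      have cs' : Continuous (fderiv ℝ s) := hs.continuous_fderiv (by norm_num)
      let h1 : ℝ × ℝ × ℝ → ℝ := fun v => - k η * v.2.1 ^ 2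
      let h2 : ℝ × ℝ × ℝ → ℝ := fun v => k η * v.1 * v.2.1 - a * v.1
      have ch1 : ContDiff ℝ 1 h1 := by fun_prop
      have ch2 : ContDiff ℝ 1 h2 := by fun_prop
      have b1 := ut_ibp h1 s ch1 hs K hK z0 z1 (1, 0, 0)
      have b2 := ut_ibp h2 s ch2 hs K hK z0 z1 (0, 1, 0)
      have d1 : ∀ v, fderiv ℝ h1 v (1, 0, 0) = 0 := by
        intro v
        rw [← (ch1.differentiable (by norm_num) v).lineDeriv_eq_fderiv, lineDeriv]
        simp [h1]
      have d2 : ∀ v, fderiv ℝ h2 v (0, 1, 0) = k η * v.1 := by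
        intro v
        rw [← (ch2.differentiable (by norm_num) v).lineDeriv_eq_fderiv, lineDeriv]
        simp only [h2, Prod.fst_add, Prod.snd_add, Prod.smul_fst, Prod.smul_snd, smul_eq_mul,
          mul_zero, mul_one, add_zero]
        have : HasDerivAt (fun x : ℝ => k η * v.1 * (v.2.1 + x) - a * v.1)
          (k η * v.1 * 1) 0 := ((((hasDerivAt_id (0:ℝ)).const_add v.2.1).const_mul _).sub_const _)
        rw [this.deriv, mul_one]
      simp only [d1, d2, zero_mul, integral_zero, neg_zero] at b1 b2
      have e : ∀ v, G3 (t, η, v) = h1 v * fderiv ℝ s v (1, 0, 0)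
          + h2 v * fderiv ℝ s v (0, 1, 0) + k η * v.1 * s v := by
        intro v
        simp only [hs']
        rfl
      simp_rw [e]
      have c1 := ch1.continuous
      have c2 := ch2.continuous
      have i1 : Integrable (fun v => h1 v * fderiv ℝ s v (1, 0, 0)) :=
        ut_intV _ (by fun_prop) K hK (fun v hv => by simp [z1 v hv])
      have i2 : Integrable (fun v => h2 v * fderiv ℝ s v (0, 1, 0)) :=
        ut_intV _ (by fun_prop) K hK (fun v hv => by simp [z1 v hv])
      have i3 : Integrable (fun v => k η * v.1 * s v) :=
        ut_intV _ (by fun_prop) K hK (fun v hv => by simp [z0 v hv])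
      have i12 : Integrable (fun v => h1 v * fderiv ℝ s v (1, 0, 0)
          + h2 v * fderiv ℝ s v (0, 1, 0)) := i1.add i2
      rw [integral_add i12 i3, integral_add i1 i2, b1, b2]
      ring
    simp_rw [this]
    simp
  have hG2 : ∀ t, ∫ q in Q, G2 (t, q) = ∫ v, v.1 * (w (t, η₁, v) - w (t, 0, v)) := by
    intro t
    have h1 := jG2 t
    rw [hQ, Measure.volume_eq_prod, setIntegral_prod _ h1,
      ut_swap (fun q => G2 (t, q)) _ _ h1, setIntegral_univ]
    congr 1
    ext v
    rw [ut_ftc (fun η => v.1 * w (t, η, v)) (fun η => G2 (t, η, v)) η₁ hη ?_ (by fun_prop)]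
    · ring
    · intro η
      have h2 : HasDerivAt (fun η : ℝ => ((t, η, v) : ℝ × ℝ × ℝ × ℝ × ℝ)) (0, 1, 0) η :=
        (hasDerivAt_const η t).prodMk ((hasDerivAt_id η).prodMk (hasDerivAt_const η v))
      exact ((dw (t, η, v)).comp_hasDerivAt η h2).const_mul v.1
  have hG1 : ∫ t in Ioo 0 T, ∫ q in Q, G1 (t, q) = (∫ q in Q, w (T, q)) - ∫ q in Q, w (0, q) := by
    rw [ut_swap G1 _ _ iG1, ← integral_sub]
    · congr 1
      ext q
      refine ut_ftc (fun t => w (t, q)) (fun t => G1 (t, q)) T hT ?_ (by fun_prop)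
      intro t
      have h2 : HasDerivAt (fun t : ℝ => ((t, q) : ℝ × ℝ × ℝ × ℝ × ℝ)) (1, 0) t :=
        (hasDerivAt_id t).prodMk (hasDerivAt_const t q)
      exact (dw (t, q)).comp_hasDerivAt t h2
    · exact ut_intQ η₁ _ (by fun_prop) K hK (fun η v => hw0 T η v)
    · exact ut_intQ η₁ _ (by fun_prop) K hK (fun η v => hw0 0 η v)
  have hsum : ∀ t, ∫ q in Q, (G1 (t, q) + G2 (t, q) + G3 (t, q))
      = (∫ q in Q, G1 (t, q)) + ∫ q in Q, G2 (t, q) := by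
    intro t
    have j12 : IntegrableOn (fun q => G1 (t, q) + G2 (t, q)) Q := (jG1 t).add (jG2 t)
    rw [integral_add j12 (jG3 t), integral_add (jG1 t) (jG2 t), hG3, add_zero]
  simp_rw [hsum]
  rw [integral_add (ut_fub G1 _ _ iG1) (ut_fub G2 _ _ iG2), hG1]
  simp_rw [← hG2, hQ]

lemma ut_psi (η₁ τ : ℝ) (hη : 0 < η₁) (hτ : 0 < τ) :
    ∃ ψ : ℝ × ℝ × ℝ × ℝ → ℝ, ContDiff ℝ 1 ψ ∧
      (∀ η v, v ∉ Metric.closedBall (0 : ℝ × ℝ × ℝ) (2 / τ) → ψ (η, v) = 0) ∧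
      (∀ η v, η ∈ Icc 0 η₁ → 0 ≤ ψ (η, v) ∧ ψ (η, v) ≤ 1) ∧
      (∀ v, 0 ≤ v.1 * ψ (η₁, v)) ∧ (∀ v, v.1 * ψ (0, v) ≤ 0) ∧
      (∀ v : ℝ × ℝ × ℝ, τ ≤ v.1 → v.1 ^ 2 + v.2.1 ^ 2 + v.2.2 ^ 2 ≤ (1 / τ) ^ 2 → ψ (η₁, v) = 1) ∧
      (∀ v : ℝ × ℝ × ℝ, v.1 ≤ -τ → v.1 ^ 2 + v.2.1 ^ 2 + v.2.2 ^ 2 ≤ (1 / τ) ^ 2 →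
        ψ (0, v) = 1) := by
  have cS : ContDiff ℝ 1 Real.smoothTransition := Real.smoothTransition.contDiff (n := 1)
  refine ⟨fun q => (q.1 / η₁ * Real.smoothTransition (q.2.1 / τ)
    + (1 - q.1 / η₁) * Real.smoothTransition (-q.2.1 / τ))
    * Real.smoothTransition (2 - τ ^ 2 * (q.2.1 ^ 2 + q.2.2.1 ^ 2 + q.2.2.2 ^ 2)),
    ?_, ?_, ?_, ?_, ?_, ?_, ?_⟩
  · have h1 : ContDiff ℝ 1 (fun q : ℝ × ℝ × ℝ × ℝ => Real.smoothTransition (q.2.1 / τ)) :=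
      cS.comp (by fun_prop)
    have h2 : ContDiff ℝ 1 (fun q : ℝ × ℝ × ℝ × ℝ => Real.smoothTransition (-q.2.1 / τ)) :=
      cS.comp (by fun_prop)
    have h3 : ContDiff ℝ 1 (fun q : ℝ × ℝ × ℝ × ℝ => Real.smoothTransition
      (2 - τ ^ 2 * (q.2.1 ^ 2 + q.2.2.1 ^ 2 + q.2.2.2 ^ 2))) :=
      cS.comp (by fun_prop)
    fun_prop
  · rintro η ⟨x, y, z⟩ hv
    have hsq : ∀ x : ℝ, 2 / τ < |x| → 4 ≤ τ ^ 2 * x ^ 2 := by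
      intro x hx
      rw [div_lt_iff₀ hτ] at hx
      have : τ ^ 2 * x ^ 2 = (|x| * τ) ^ 2 := by rw [mul_pow, sq_abs]; ring
      rw [this]; nlinarith
    have : 2 - τ ^ 2 * (x ^ 2 + y ^ 2 + z ^ 2) ≤ 0 := by
      simp only [mem_closedBall_zero_iff, Prod.norm_def, Real.norm_eq_abs, max_le_iff, not_and_or,
        not_le] at hv
      have hx := mul_nonneg (sq_nonneg τ) (sq_nonneg x)
      have hy := mul_nonneg (sq_nonneg τ) (sq_nonneg y)
      have hz := mul_nonneg (sq_nonneg τ) (sq_nonneg z)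
      rcases hv with h | h | h <;> have := hsq _ h <;> linarith
    simp [Real.smoothTransition.zero_of_nonpos this]
  · rintro η v ⟨h0, h1⟩
    have a0 : 0 ≤ η / η₁ := by positivity
    have a1 : η / η₁ ≤ 1 := by rw [div_le_one hη]; exact h1
    have s1 := Real.smoothTransition.nonneg (v.1 / τ)
    have s2 := Real.smoothTransition.nonneg (-v.1 / τ)
    have s3 := Real.smoothTransition.nonneg (2 - τ ^ 2 * (v.1 ^ 2 + v.2.1 ^ 2 + v.2.2 ^ 2))
    have t1 := Real.smoothTransition.le_one (v.1 / τ)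
    have t2 := Real.smoothTransition.le_one (-v.1 / τ)
    have t3 := Real.smoothTransition.le_one (2 - τ ^ 2 * (v.1 ^ 2 + v.2.1 ^ 2 + v.2.2 ^ 2))
    have b : 0 ≤ 1 - η / η₁ := by linarith
    constructor
    · positivity
    · refine mul_le_one₀ ?_ s3 t3
      nlinarith
  · intro v
    have s3 := Real.smoothTransition.nonneg (2 - τ ^ 2 * (v.1 ^ 2 + v.2.1 ^ 2 + v.2.2 ^ 2))
    have s1 := Real.smoothTransition.nonneg (v.1 / τ)
    simp only [div_self hη.ne', sub_self, zero_mul, one_mul, add_zero]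
    rcases le_total 0 v.1 with h | h
    · positivity
    · rw [Real.smoothTransition.zero_of_nonpos (div_nonpos_of_nonpos_of_nonneg h hτ.le)]; simp
  · intro v
    have s3 := Real.smoothTransition.nonneg (2 - τ ^ 2 * (v.1 ^ 2 + v.2.1 ^ 2 + v.2.2 ^ 2))
    have s1 := Real.smoothTransition.nonneg (-v.1 / τ)
    simp only [zero_div, sub_zero, zero_mul, one_mul, zero_add]
    rcases le_total 0 v.1 with h | h
    · rw [Real.smoothTransition.zero_of_nonpos
        (div_nonpos_of_nonpos_of_nonneg (by linarith) hτ.le)]; simp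
    · exact mul_nonpos_of_nonpos_of_nonneg h (by positivity)
  · intro v h1 h2
    have : 1 ≤ 2 - τ ^ 2 * (v.1 ^ 2 + v.2.1 ^ 2 + v.2.2 ^ 2) := by
      have := mul_le_mul_of_nonneg_left h2 (sq_nonneg τ)
      rw [← mul_pow, mul_one_div_cancel hτ.ne'] at this
      linarith
    simp [div_self hη.ne', Real.smoothTransition.one_of_one_le this,
      Real.smoothTransition.one_of_one_le ((one_le_div hτ).2 h1)]
  · intro v h1 h2
    have : 1 ≤ 2 - τ ^ 2 * (v.1 ^ 2 + v.2.1 ^ 2 + v.2.2 ^ 2) := by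
      have := mul_le_mul_of_nonneg_left h2 (sq_nonneg τ)
      rw [← mul_pow, mul_one_div_cancel hτ.ne'] at this
      linarith
    simp only [zero_div, sub_zero, zero_mul, one_mul, zero_add]
    rw [Real.smoothTransition.one_of_one_le this,
      Real.smoothTransition.one_of_one_le ((one_le_div hτ).2 (by linarith)), one_mul]

lemma ut_bound (η₁ : ℝ) (k : ℝ → ℝ) (hk : Continuous k) (K : Set (ℝ × ℝ × ℝ))
    (hK : IsCompact K) (ψ : ℝ × ℝ × ℝ × ℝ → ℝ) (hψ : ContDiff ℝ 1 ψ)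
    (h0 : ∀ η v, v ∉ K → ψ (η, v) = 0) :
    ∃ C > 0, ∀ α ∈ Icc (0:ℝ) 1, ∀ η ∈ Icc 0 η₁, ∀ v : ℝ × ℝ × ℝ,
      |fderiv ℝ ψ (η, v) (v.1, - k η * v.2.1 ^ 2, k η * v.1 * v.2.1 - α / η₁ * v.1, 0)
        + k η * v.1 * ψ (η, v)| ≤ C := by
  have c1 := hψ.continuous
  have c2 : Continuous (fderiv ℝ ψ) := hψ.continuous_fderiv (by norm_num)
  have hψ1 : ∀ η v, v ∉ K → fderiv ℝ ψ (η, v) = 0 := by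
    intro η v hv
    have : ψ =ᶠ[nhds (η, v)] (fun _ => 0) := by
      have ho : IsOpen {p : ℝ × ℝ × ℝ × ℝ | p.2 ∉ K} :=
        hK.isClosed.isOpen_compl.preimage (by fun_prop)
      filter_upwards [ho.mem_nhds (show (η, v) ∈ {p : ℝ × ℝ × ℝ × ℝ | p.2 ∉ K} from hv)]
        with p hp
      exact h0 p.1 p.2 hp
    rw [this.fderiv_eq]; simp
  let H : ℝ × ℝ × ℝ × ℝ × ℝ → ℝ := fun p => fderiv ℝ ψ p.2 (p.2.2.1, - k p.2.1 * p.2.2.2.1 ^ 2,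
    k p.2.1 * p.2.2.1 * p.2.2.2.1 - p.1 / η₁ * p.2.2.1, 0) + k p.2.1 * p.2.2.1 * ψ p.2
  have cH : Continuous H := by fun_prop
  obtain ⟨C, hC⟩ := (((isCompact_Icc (a := (0:ℝ)) (b := 1)).prod
    ((isCompact_Icc (a := (0:ℝ)) (b := η₁)).prod hK))).exists_bound_of_continuousOn cH.continuousOn
  refine ⟨max C 1, by positivity, ?_⟩
  intro α hα η hη v
  by_cases hv : v ∈ K
  · exact (hC (α, η, v) ⟨hα, hη, hv⟩).trans (le_max_left _ _)
  · rw [hψ1 η v hv, h0 η v hv]; simp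

lemma ut_bdry (K S : Set (ℝ × ℝ × ℝ)) (hK : IsCompact K) (hS : MeasurableSet S) (hSK : S ⊆ K)
    (φ W m : ℝ × ℝ × ℝ → ℝ) (hφ : Continuous φ) (hW : Continuous W) (hm : Continuous m) (ε : ℝ)
    (W0 : ∀ v, 0 ≤ W v) (WK : ∀ v, v ∉ K → W v = 0) (h : ∀ v ∈ S, φ v ≤ W v + ε * m v) :
    ∫ v in S, φ v ≤ (∫ v, W v) + ε * ∫ v in S, m v := by
  have i : ∀ F : ℝ × ℝ × ℝ → ℝ, Continuous F → IntegrableOn F S := fun F hF =>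
    (hF.continuousOn.integrableOn_compact hK).mono_set hSK
  have iW : Integrable W := ut_intV W hW K hK WK
  calc ∫ v in S, φ v ≤ ∫ v in S, (W v + ε * m v) :=
        setIntegral_mono_on (i _ hφ) (i _ (by fun_prop)) hS h
    _ = (∫ v in S, W v) + ε * ∫ v in S, m v := by
        rw [integral_add (i _ hW) (i _ (by fun_prop)), integral_const_mul]
    _ ≤ _ := by
        have := setIntegral_le_integral (s := S) iW (Filter.Eventually.of_forall W0)
        linarith

lemma ut_reg (f : ℝ × ℝ × ℝ × ℝ × ℝ → ℝ) (hf : ContDiff ℝ 1 f) (ε : ℝ) (hε : 0 < ε) :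
    ∃ g : ℝ × ℝ × ℝ × ℝ × ℝ → ℝ, ContDiff ℝ 1 g ∧ (∀ p, 0 ≤ g p) ∧ (∀ p, g p ≤ |f p|) ∧
      (∀ p, |f p| ≤ g p + ε) ∧ (∀ p X, |fderiv ℝ g p X| ≤ |fderiv ℝ f p X|) := by
  have hpos : ∀ p, 0 < f p ^ 2 + ε ^ 2 := fun p => by positivity
  have habs : ∀ p, |f p| ≤ √(f p ^ 2 + ε ^ 2) := fun p => Real.abs_le_sqrt (by nlinarith)
  refine ⟨fun p => √(f p ^ 2 + ε ^ 2) - ε, ?_, ?_, ?_, ?_, ?_⟩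
  · refine ContDiff.sub (ContDiff.sqrt (by fun_prop) (fun p => (hpos p).ne')) contDiff_const
  · intro p
    have : ε ≤ √(f p ^ 2 + ε ^ 2) := Real.le_sqrt_of_sq_le (by nlinarith [sq_nonneg (f p)])
    linarith
  · intro p
    have : √(f p ^ 2 + ε ^ 2) ≤ |f p| + ε := by
      rw [Real.sqrt_le_left (by positivity)]
      nlinarith [sq_abs (f p), abs_nonneg (f p)]
    linarith
  · intro p
    have := habs p
    linarith
  · intro p X
    have hd : HasFDerivAt f (fderiv ℝ f p) p := (hf.differentiable (by norm_num) p).hasFDerivAt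
    have h1 := (((hd.pow 2).add_const (ε ^ 2)).sqrt (hpos p).ne').sub_const ε
    rw [h1.fderiv]
    have hs : 0 < √(f p ^ 2 + ε ^ 2) := Real.sqrt_pos.2 (hpos p)
    have e : ((1 / (2 * √(f p ^ 2 + ε ^ 2))) • (2 • f p ^ (2 - 1)) • fderiv ℝ f p) X
        = (f p / √(f p ^ 2 + ε ^ 2)) * fderiv ℝ f p X := by
      simp only [smul_apply, smul_eq_mul, nsmul_eq_mul]
      norm_num
      field_simp
    have e2 : |f p / √(f p ^ 2 + ε ^ 2)| ≤ 1 := by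
      rw [abs_div, abs_of_pos hs, div_le_one hs]; exact habs p
    rw [e, abs_mul]
    exact mul_le_of_le_one_left (abs_nonneg _) e2

/-- **Time-dependent trace lemma.** For the Taylor–Couette transport operator with
geometric correction on the channel `(0,η₁) × ℝ³` (phase point
`p = (t, η, v_η, v_φ, v_z)`), the outgoing boundary trace, time-integrated over
`(0,T)` and away from grazing velocities, is controlled by
`‖f(0)‖_{L¹} + ∫₀^T ‖f(t)‖_{L¹} dt + ∫₀^T ‖(∂_t f + Tf)(t)‖_{L¹} dt`. -/
theorem unsteady_trace_lemma
    (η₁ : ℝ) (hη₁ : 0 < η₁) (hη₁' : η₁ < 1)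
    (τ : ℝ) (hτ : 0 < τ) (hτ' : τ < 1) :
    ∃ α₀, 0 < α₀ ∧ α₀ < 1 ∧ ∃ C > 0, ∀ α : ℝ, 0 < α → α < α₀ → ∀ T : ℝ, 0 < T →
      ∀ f : ℝ × ℝ × ℝ × ℝ × ℝ → ℝ, ContDiff ℝ 1 f →
      ∀ Df : ℝ × ℝ × ℝ × ℝ × ℝ → ℝ,
      (Df = fun p => fderiv ℝ f p (1, 0, 0, 0, 0)
          + p.2.2.1 * fderiv ℝ f p (0, 1, 0, 0, 0)
          - 1 / (1 - p.2.1) * ((p.2.2.2.1) ^ 2 * fderiv ℝ f p (0, 0, 1, 0, 0)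
              - p.2.2.1 * p.2.2.2.1 * fderiv ℝ f p (0, 0, 0, 1, 0))
          - α / η₁ * p.2.2.1 * fderiv ℝ f p (0, 0, 0, 1, 0)) →
      IntegrableOn f (Set.Ioo (0 : ℝ) T ×ˢ
          (Set.Ioo (0 : ℝ) η₁ ×ˢ (Set.univ : Set (ℝ × ℝ × ℝ)))) →
      IntegrableOn Df (Set.Ioo (0 : ℝ) T ×ˢ
          (Set.Ioo (0 : ℝ) η₁ ×ˢ (Set.univ : Set (ℝ × ℝ × ℝ)))) →
      IntegrableOn (fun q : ℝ × ℝ × ℝ × ℝ => f (0, q))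
          (Set.Ioo (0 : ℝ) η₁ ×ˢ (Set.univ : Set (ℝ × ℝ × ℝ))) →
      (∀ t ∈ Set.Icc (0 : ℝ) T,
          IntegrableOn (fun q : ℝ × ℝ × ℝ × ℝ => f (t, q))
            (Set.Ioo (0 : ℝ) η₁ ×ˢ (Set.univ : Set (ℝ × ℝ × ℝ)))
        ∧ IntegrableOn (fun q : ℝ × ℝ × ℝ × ℝ => Df (t, q))
            (Set.Ioo (0 : ℝ) η₁ ×ˢ (Set.univ : Set (ℝ × ℝ × ℝ)))) →
      (∫ t in Set.Ioo (0 : ℝ) T,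
          ((∫ v in {v : ℝ × ℝ × ℝ | τ ≤ v.1 ∧ τ ≤ |v.2.1| ∧
                Real.sqrt (v.1 ^ 2 + v.2.1 ^ 2 + v.2.2 ^ 2) ≤ 1 / τ},
              |f (t, η₁, v)| * |v.1|)
            + (∫ v in {v : ℝ × ℝ × ℝ | v.1 ≤ -τ ∧ τ ≤ |v.2.1| ∧
                Real.sqrt (v.1 ^ 2 + v.2.1 ^ 2 + v.2.2 ^ 2) ≤ 1 / τ},
              |f (t, 0, v)| * |v.1|)))
      ≤ C * ((∫ q in Set.Ioo (0 : ℝ) η₁ ×ˢ (Set.univ : Set (ℝ × ℝ × ℝ)), |f (0, q)|)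
          + (∫ t in Set.Ioo (0 : ℝ) T,
              (∫ q in Set.Ioo (0 : ℝ) η₁ ×ˢ (Set.univ : Set (ℝ × ℝ × ℝ)), |f (t, q)|))
          + (∫ t in Set.Ioo (0 : ℝ) T,
              (∫ q in Set.Ioo (0 : ℝ) η₁ ×ˢ (Set.univ : Set (ℝ × ℝ × ℝ)), |Df (t, q)|))) := by
  set k : ℝ → ℝ := fun η => 1 / max (1 - η) (1 - η₁) with hkdef
  have hk : Continuous k := by
    refine continuous_const.div (by fun_prop) (fun η => ?_)
    have : 0 < max (1 - η) (1 - η₁) := lt_max_of_lt_right (by linarith)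
    exact this.ne'
  have hkη : ∀ η ≤ η₁, k η = 1 / (1 - η) := by
    intro η h
    simp only [hkdef]
    rw [max_eq_left (by linarith)]
  obtain ⟨ψ, hψ, ψK, ψ01, ψp, ψm, ψp1, ψm1⟩ := ut_psi η₁ τ hη₁ hτ
  set K := Metric.closedBall (0 : ℝ × ℝ × ℝ) (2 / τ) with hKdef
  have hK : IsCompact K := isCompact_closedBall _ _
  obtain ⟨C, hC0, hC⟩ := ut_bound η₁ k hk K hK ψ hψ ψK
  refine ⟨1 / 2, by norm_num, by norm_num, C + 1, by linarith, ?_⟩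
  intro α hα0 hα1 T hT f hf Df hDf iF iD iF0 hslice
  set Sp : Set (ℝ × ℝ × ℝ) := {v : ℝ × ℝ × ℝ | τ ≤ v.1 ∧ τ ≤ |v.2.1| ∧
                Real.sqrt (v.1 ^ 2 + v.2.1 ^ 2 + v.2.2 ^ 2) ≤ 1 / τ} with hSp
  set Sm : Set (ℝ × ℝ × ℝ) := {v : ℝ × ℝ × ℝ | v.1 ≤ -τ ∧ τ ≤ |v.2.1| ∧
                Real.sqrt (v.1 ^ 2 + v.2.1 ^ 2 + v.2.2 ^ 2) ≤ 1 / τ} with hSm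
  set Q : Set (ℝ × ℝ × ℝ × ℝ) := Ioo (0 : ℝ) η₁ ×ˢ (univ : Set (ℝ × ℝ × ℝ)) with hQ
  have mQ : MeasurableSet Q := measurableSet_Ioo.prod MeasurableSet.univ
  have mSp : MeasurableSet Sp := by
    apply IsClosed.measurableSet
    refine IsClosed.inter (isClosed_le (f := fun v : ℝ × ℝ × ℝ => τ)
      (g := fun v : ℝ × ℝ × ℝ => v.1) (by fun_prop) (by fun_prop))
      (IsClosed.inter (isClosed_le (f := fun v : ℝ × ℝ × ℝ => τ)
        (g := fun v : ℝ × ℝ × ℝ => |v.2.1|) (by fun_prop) (by fun_prop))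
      (isClosed_le (f := fun v : ℝ × ℝ × ℝ => Real.sqrt (v.1 ^ 2 + v.2.1 ^ 2 + v.2.2 ^ 2))
        (g := fun v : ℝ × ℝ × ℝ => 1 / τ) (by fun_prop) (by fun_prop)))
  have mSm : MeasurableSet Sm := by
    apply IsClosed.measurableSet
    refine IsClosed.inter (isClosed_le (f := fun v : ℝ × ℝ × ℝ => v.1)
      (g := fun v : ℝ × ℝ × ℝ => -τ) (by fun_prop) (by fun_prop))
      (IsClosed.inter (isClosed_le (f := fun v : ℝ × ℝ × ℝ => τ)
        (g := fun v : ℝ × ℝ × ℝ => |v.2.1|) (by fun_prop) (by fun_prop))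
      (isClosed_le (f := fun v : ℝ × ℝ × ℝ => Real.sqrt (v.1 ^ 2 + v.2.1 ^ 2 + v.2.2 ^ 2))
        (g := fun v : ℝ × ℝ × ℝ => 1 / τ) (by fun_prop) (by fun_prop)))
  have hsq : ∀ v : ℝ × ℝ × ℝ, Real.sqrt (v.1 ^ 2 + v.2.1 ^ 2 + v.2.2 ^ 2) ≤ 1 / τ →
      v.1 ^ 2 + v.2.1 ^ 2 + v.2.2 ^ 2 ≤ (1 / τ) ^ 2 := by
    intro v hv
    exact (Real.sqrt_le_left (by positivity)).1 hv
  have SpK : Sp ⊆ K := by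
    intro v hv
    by_contra h
    have h1 := ψp1 v hv.1 (hsq v hv.2.2)
    rw [ψK _ _ h] at h1
    norm_num at h1
  have SmK : Sm ⊆ K := by
    intro v hv
    by_contra h
    have h1 := ψm1 v hv.1 (hsq v hv.2.2)
    rw [ψK _ _ h] at h1
    norm_num at h1
  have cf := hf.continuous
  have cψ := hψ.continuous
  set M : ℝ := (∫ v in Sp, |v.1|) + ∫ v in Sm, |v.1| with hM
  have hM0 : 0 ≤ M := add_nonneg (integral_nonneg fun _ => abs_nonneg _)
    (integral_nonneg fun _ => abs_nonneg _)
  -- the transport derivative as a directional derivative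
  have hDfX : ∀ (t : ℝ) (q : ℝ × ℝ × ℝ × ℝ), q.1 ≤ η₁ → Df (t, q) = fderiv ℝ f (t, q)
      (1, q.2.1, - k q.1 * q.2.2.1 ^ 2, k q.1 * q.2.1 * q.2.2.1 - α / η₁ * q.2.1, 0) := by
    intro t q hq
    have : ((1, q.2.1, - k q.1 * q.2.2.1 ^ 2,
          k q.1 * q.2.1 * q.2.2.1 - α / η₁ * q.2.1, 0) : ℝ × ℝ × ℝ × ℝ × ℝ)
        = (1, 0, 0, 0, 0) + q.2.1 • (0, 1, 0, 0, 0) + (- k q.1 * q.2.2.1 ^ 2) • (0, 0, 1, 0, 0)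
          + (k q.1 * q.2.1 * q.2.2.1 - α / η₁ * q.2.1) • (0, 0, 0, 1, 0) := by
      ext <;> simp
    rw [this, hDf]
    simp only [map_add, map_smul, smul_eq_mul, ← hkη q.1 hq]
    ring
  have nF : Integrable (fun t => ∫ q in Q, |f (t, q)|) (volume.restrict (Ioo 0 T)) :=
    ut_fub (fun p => |f p|) _ _ iF.abs
  have nD : Integrable (fun t => ∫ q in Q, |Df (t, q)|) (volume.restrict (Ioo 0 T)) :=
    ut_fub (fun p => |Df p|) _ _ iD.abs
  have key : ∀ ε > 0, (∫ t in Ioo (0 : ℝ) T, ((∫ v in Sp, |f (t, η₁, v)| * |v.1|)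
        + (∫ v in Sm, |f (t, 0, v)| * |v.1|)))
      ≤ (∫ q in Q, |f (0, q)|) + C * (∫ t in Ioo (0 : ℝ) T, ∫ q in Q, |f (t, q)|)
        + (∫ t in Ioo (0 : ℝ) T, ∫ q in Q, |Df (t, q)|) + ε * (T * M) := by
    intro ε hε
    obtain ⟨g, hg, g0, gf, fg, dg⟩ := ut_reg f hf ε hε
    have cg := hg.continuous
    let w : ℝ × ℝ × ℝ × ℝ × ℝ → ℝ := fun p => g p * ψ p.2
    have hw : ContDiff ℝ 1 w := hg.mul (hψ.comp contDiff_snd)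
    have cw := hw.continuous
    have cw' : Continuous (fderiv ℝ w) := hw.continuous_fderiv (by norm_num)
    have hw0 : ∀ t η v, v ∉ K → w (t, η, v) = 0 := fun t η v hv => by simp [w, ψK η v hv]
    have hdiv := ut_div η₁ T (α / η₁) hη₁ hT k hk K hK w hw hw0
    rw [← hQ] at hdiv
    let B : ℝ → ℝ := fun t => ∫ v, v.1 * (w (t, η₁, v) - w (t, 0, v))
    have iB : Integrable B (volume.restrict (Ioo 0 T)) := by
      have h1 : IntegrableOn (fun p : ℝ × ℝ × ℝ × ℝ => p.2.1 * (w (p.1, η₁, p.2) - w (p.1, 0, p.2)))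
          (Ioo (0:ℝ) T ×ˢ (univ : Set (ℝ × ℝ × ℝ))) :=
        ut_intQ T _ (by fun_prop) K hK (fun t v hv => by simp [hw0 _ _ v hv])
      have h2 := ut_fub _ _ _ h1
      simpa only [setIntegral_univ] using h2
    -- boundary
    have hL : ∀ t, (∫ v in Sp, |f (t, η₁, v)| * |v.1|) + (∫ v in Sm, |f (t, 0, v)| * |v.1|)
        ≤ B t + ε * M := by
      intro t
      have h1 := ut_bdry K Sp hK mSp SpK (fun v => |f (t, η₁, v)| * |v.1|)
        (fun v => v.1 * w (t, η₁, v)) (fun v => |v.1|) (by fun_prop) (by fun_prop) (by fun_prop) ε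
        (fun v => by
          have := mul_nonneg (g0 (t, η₁, v)) (ψp v)
          simp only [w]; linarith)
        (fun v hv => by simp [hw0 _ _ v hv])
        (fun v hv => by
          have e1 := ψp1 v hv.1 (hsq v hv.2.2)
          have e2 : |v.1| = v.1 := abs_of_pos (hτ.trans_le hv.1)
          have := mul_le_mul_of_nonneg_right (fg (t, η₁, v)) (abs_nonneg v.1)
          simp only [w, e1, mul_one]
          rw [e2] at this ⊢
          linarith)
      have h2 := ut_bdry K Sm hK mSm SmK (fun v => |f (t, 0, v)| * |v.1|)
        (fun v => -(v.1 * w (t, 0, v))) (fun v => |v.1|) (by fun_prop) (by fun_prop) (by fun_prop) ε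
        (fun v => by
          have := mul_nonneg (g0 (t, 0, v)) (neg_nonneg.2 (ψm v))
          simp only [w]; linarith)
        (fun v hv => by simp [hw0 _ _ v hv])
        (fun v hv => by
          have e1 := ψm1 v hv.1 (hsq v hv.2.2)
          have e2 : |v.1| = -v.1 := abs_of_neg (by linarith [hv.1])
          have := mul_le_mul_of_nonneg_right (fg (t, 0, v)) (abs_nonneg v.1)
          simp only [w, e1, mul_one]
          rw [e2] at this ⊢
          linarith)
      have h3 : B t = (∫ v, v.1 * w (t, η₁, v)) + ∫ v, -(v.1 * w (t, 0, v)) := by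
        rw [← integral_add]
        · refine integral_congr_ae (Filter.Eventually.of_forall fun v => ?_)
          simp only
          ring
        · exact ut_intV _ (by fun_prop) K hK (fun v hv => by simp [hw0 _ _ v hv])
        · exact ut_intV _ (by fun_prop) K hK (fun v hv => by simp [hw0 _ _ v hv])
      rw [h3, hM]
      linarith
    have hL2 : (∫ t in Ioo (0 : ℝ) T, ((∫ v in Sp, |f (t, η₁, v)| * |v.1|)
        + (∫ v in Sm, |f (t, 0, v)| * |v.1|))) ≤ (∫ t in Ioo 0 T, B t) + ε * (T * M) := by
      have h1 : (∫ t in Ioo 0 T, (B t + ε * M)) = (∫ t in Ioo 0 T, B t) + ε * (T * M) := by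
        rw [integral_add iB (integrable_const _)]
        simp [hT.le]
        ring
      rw [← h1]
      refine integral_mono_of_nonneg (Filter.Eventually.of_forall fun t => ?_)
        (iB.add (integrable_const _)) (Filter.Eventually.of_forall hL)
      exact add_nonneg (integral_nonneg fun _ => by positivity)
        (integral_nonneg fun _ => by positivity)
    -- interior
    let P : ℝ × ℝ × ℝ × ℝ × ℝ → ℝ := fun p =>
      fderiv ℝ w p (1, p.2.2.1, - k p.2.1 * p.2.2.2.1 ^ 2,
          k p.2.1 * p.2.2.1 * p.2.2.2.1 - α / η₁ * p.2.2.1, 0) + k p.2.1 * p.2.2.1 * w p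
    have cP : Continuous P := by fun_prop
    have hdw : ∀ t (q : ℝ × ℝ × ℝ × ℝ) (x : ℝ) (y : ℝ × ℝ × ℝ × ℝ), fderiv ℝ w (t, q) (x, y)
        = ψ q * fderiv ℝ g (t, q) (x, y) + g (t, q) * fderiv ℝ ψ q y := by
      intro t q x y
      have h1 : HasFDerivAt g (fderiv ℝ g (t, q)) (t, q) :=
        (hg.differentiable (by norm_num) _).hasFDerivAt
      have h2 : HasFDerivAt ψ (fderiv ℝ ψ q) q :=
        (hψ.differentiable (by norm_num) _).hasFDerivAt
      have h3 : HasFDerivAt (fun p : ℝ × ℝ × ℝ × ℝ × ℝ => ψ p.2)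
          ((fderiv ℝ ψ q).comp (ContinuousLinearMap.snd ℝ ℝ (ℝ × ℝ × ℝ × ℝ))) (t, q) :=
        HasFDerivAt.comp (t, q) (g := ψ) (f := Prod.snd) h2 hasFDerivAt_snd
      have h4 : HasFDerivAt w _ (t, q) := h1.mul h3
      rw [h4.fderiv]
      simp
      ring
    have hP : ∀ t, ∀ q ∈ Q, P (t, q) ≤ |Df (t, q)| + C * |f (t, q)| := by
      rintro t ⟨η, v⟩ hq
      have hη : η ∈ Icc 0 η₁ := Ioo_subset_Icc_self hq.1
      have h1 := hC α ⟨hα0.le, by linarith⟩ η hη v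
      have h2 := ψ01 η v hη
      have h3 := dg (t, η, v) (1, v.1, - k η * v.2.1 ^ 2, k η * v.1 * v.2.1 - α / η₁ * v.1, 0)
      have h4 := hDfX t (η, v) hη.2
      simp only at h4
      rw [← h4] at h3
      simp only [P, hdw, w]
      set G := fderiv ℝ g (t, η, v) (1, v.1, - k η * v.2.1 ^ 2,
        k η * v.1 * v.2.1 - α / η₁ * v.1, 0)
      set R := fderiv ℝ ψ (η, v) (v.1, - k η * v.2.1 ^ 2, k η * v.1 * v.2.1 - α / η₁ * v.1, 0)
      have a1 : ψ (η, v) * G ≤ |Df (t, η, v)| := by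
        calc ψ (η, v) * G ≤ ψ (η, v) * |G| := mul_le_mul_of_nonneg_left (le_abs_self _) h2.1
          _ ≤ 1 * |G| := mul_le_mul_of_nonneg_right h2.2 (abs_nonneg _)
          _ ≤ _ := by rw [one_mul]; exact h3
      have a2 : g (t, η, v) * (R + k η * v.1 * ψ (η, v)) ≤ C * |f (t, η, v)| := by
        calc g (t, η, v) * (R + k η * v.1 * ψ (η, v)) ≤ g (t, η, v) * C :=
              mul_le_mul_of_nonneg_left ((le_abs_self _).trans h1) (g0 _)
          _ ≤ |f (t, η, v)| * C := mul_le_mul_of_nonneg_right (gf _) hC0.le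
          _ = _ := mul_comm _ _
      linarith
    have hw1 : ∀ t η v, v ∉ K → fderiv ℝ w (t, η, v) = 0 := by
      intro t η v hv
      have : w =ᶠ[nhds (t, η, v)] (fun _ => 0) := by
        have ho : IsOpen {p : ℝ × ℝ × ℝ × ℝ × ℝ | p.2.2 ∉ K} :=
          hK.isClosed.isOpen_compl.preimage (by fun_prop)
        filter_upwards [ho.mem_nhds
          (show (t, η, v) ∈ {p : ℝ × ℝ × ℝ × ℝ × ℝ | p.2.2 ∉ K} from hv)] with p hp
        exact hw0 p.1 p.2.1 p.2.2 hp
      rw [this.fderiv_eq]; simp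
    have zP : ∀ t η v, v ∉ K → P (t, η, v) = 0 := fun t η v hv => by
      simp [P, hw1 t η v hv, hw0 t η v hv]
    have iP := ut_intP T η₁ P cP K hK zP
    have hP2 : ∀ t ∈ Ioo 0 T, ∫ q in Q, P (t, q)
        ≤ (∫ q in Q, |Df (t, q)|) + C * ∫ q in Q, |f (t, q)| := by
      intro t ht
      obtain ⟨s1, s2⟩ := hslice t (Ioo_subset_Icc_self ht)
      have i1 : IntegrableOn (fun q => |Df (t, q)|) Q := s2.abs
      have i2 : IntegrableOn (fun q => C * |f (t, q)|) Q := s1.abs.const_mul C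
      rw [← integral_const_mul, ← integral_add i1 i2]
      exact setIntegral_mono_on (ut_intQ η₁ _ (by fun_prop) K hK (zP t)) (i1.add i2) mQ (hP t)
    have hP3 : ∫ t in Ioo 0 T, ∫ q in Q, P (t, q)
        ≤ (∫ t in Ioo (0 : ℝ) T, ∫ q in Q, |Df (t, q)|)
          + C * ∫ t in Ioo (0 : ℝ) T, ∫ q in Q, |f (t, q)| := by
      rw [← integral_const_mul, ← integral_add nD (nF.const_mul C)]
      exact setIntegral_mono_on (ut_fub P _ _ iP) (nD.add (nF.const_mul C)) measurableSet_Ioo hP2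
    have hwT : 0 ≤ ∫ q in Q, w (T, q) :=
      setIntegral_nonneg mQ fun q hq =>
        mul_nonneg (g0 _) (ψ01 q.1 q.2 (Ioo_subset_Icc_self hq.1)).1
    have hwz : ∫ q in Q, w (0, q) ≤ ∫ q in Q, |f (0, q)| := by
      refine setIntegral_mono_on (ut_intQ η₁ _ (by fun_prop) K hK (hw0 0)) iF0.abs mQ ?_
      intro q hq
      have h2 := ψ01 q.1 q.2 (Ioo_subset_Icc_self hq.1)
      exact (mul_le_of_le_one_right (g0 _) h2.2).trans (gf _)
    have hdiv' : ∫ t in Ioo 0 T, ∫ q in Q, P (t, q) = (∫ q in Q, w (T, q))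
      - (∫ q in Q, w (0, q)) + ∫ t in Ioo 0 T, B t := hdiv
    linarith
  have hfin : (∫ t in Ioo (0 : ℝ) T, ((∫ v in Sp, |f (t, η₁, v)| * |v.1|)
        + (∫ v in Sm, |f (t, 0, v)| * |v.1|)))
      ≤ (∫ q in Q, |f (0, q)|) + C * (∫ t in Ioo (0 : ℝ) T, ∫ q in Q, |f (t, q)|)
        + (∫ t in Ioo (0 : ℝ) T, ∫ q in Q, |Df (t, q)|) := by
    refine le_of_forall_pos_le_add fun δ hδ => ?_
    have hTM : 0 ≤ T * M := mul_nonneg hT.le hM0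
    refine (key (δ / (T * M + 1)) (by positivity)).trans ?_
    have : δ / (T * M + 1) * (T * M) ≤ δ := by
      rw [div_mul_eq_mul_div, div_le_iff₀ (by positivity)]
      nlinarith
    linarith
  refine hfin.trans ?_
  have n1 : 0 ≤ ∫ q in Q, |f (0, q)| := integral_nonneg fun _ => abs_nonneg _
  have n2 : 0 ≤ ∫ t in Ioo (0 : ℝ) T, ∫ q in Q, |f (t, q)| :=
    integral_nonneg fun _ => integral_nonneg fun _ => abs_nonneg _
  have n3 : 0 ≤ ∫ t in Ioo (0 : ℝ) T, ∫ q in Q, |Df (t, q)| :=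
    integral_nonneg fun _ => integral_nonneg fun _ => abs_nonneg _
  nlinarith [mul_nonneg hC0.le n1, mul_nonneg hC0.le n3]
end

section
/- Let 0 ≤ γ ≤ 1, let B₀ : [−1,1] → ℝ be measurable with 0 ≤ B₀(c) ≤ C_B·|c|, and let ℓ > 4. Define the gain and loss parts of the Boltzmann collision operator by Q₊(F₁,F₂)(v) := ∫_{ℝ³} ∫_{S²} |v − v_*|^γ B₀(cos θ) F₁(v_*') F₂(v') dω dv_* and Q₋(F₁,F₂)(v) := ∫_{ℝ³} ∫_{S²} |v − v_*|^γ B₀(cos θ) F₁(v_*) F₂(v) dω dv_*, where v' = v + [(v_* − v)·ω]ω, v_*' = v_* − [(v_* − v)·ω]ω and cos θ = ω·(v − v_*)/|v − v_*|. Then there exists a constant C > 0, depending only on γ, ℓ and C_B, such that for all measurable F₁, F₂ : ℝ³ → ℝ with ‖w^ℓ F₁‖_{L∞} < ∞ and ‖w^ℓ F₂‖_{L∞} < ∞ and every v ∈ ℝ³: |Q₊(F₁,F₂)(v)| + |Q₋(F₁,F₂)(v)| ≤ C·(1 + |v|)^γ·(1 + |v|²)^{−ℓ/2}·‖w^ℓ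 F₁‖_{L∞}·‖w^ℓ F₂‖_{L∞}. -/
open MeasureTheory Metric
open scoped RealInnerProductSpace

theorem aux_J1 (m : ℝ) (hm : 1 / 2 < m) : ∃ K : ℝ, 0 ≤ K ∧ ∀ k : ℝ, 0 < k →
    ∫⁻ t : ℝ, ENNReal.ofReal ((k + t ^ 2) ^ (-m)) ≤ ENNReal.ofReal (K * k ^ (1 / 2 - m)) := by
  have hint : Integrable (fun t : ℝ => (1 + t ^ 2) ^ (-m)) := by
    have h := integrable_rpow_neg_one_add_norm_sq (E := ℝ) (μ := volume) (r := 2 * m)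
      (by simp; linarith)
    convert h using 2 with t
    rw [Real.norm_eq_abs, sq_abs]
    congr 1
    ring
  refine ⟨∫ t : ℝ, (1 + t ^ 2) ^ (-m), integral_nonneg fun t => by positivity, fun k hk => ?_⟩
  have hs : 0 < √k := Real.sqrt_pos.2 hk
  have hf : (fun t : ℝ => (k + t ^ 2) ^ (-m)) =
      fun t : ℝ => k ^ (-m) * (1 + (t / √k) ^ 2) ^ (-m) := by
    funext t
    rw [← Real.mul_rpow hk.le (by positivity)]
    congr 1
    rw [div_pow, Real.sq_sqrt hk.le]
    field_simp
  have hint2 : Integrable (fun t : ℝ => (k + t ^ 2) ^ (-m)) := by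
    rw [hf]
    exact (hint.comp_div hs.ne').const_mul _
  rw [← ofReal_integral_eq_lintegral_ofReal hint2
    (Filter.Eventually.of_forall fun t => by positivity)]
  apply ENNReal.ofReal_le_ofReal
  rw [hf, integral_const_mul, Measure.integral_comp_div (fun t : ℝ => (1 + t ^ 2) ^ (-m)),
    abs_of_pos hs, smul_eq_mul, sub_eq_add_neg, Real.rpow_add hk, Real.sqrt_eq_rpow]
  apply le_of_eq
  ring

theorem aux_J2 (m : ℝ) (hm : 1 < m) : ∃ K : ℝ, 0 ≤ K ∧ ∀ k : ℝ, 0 < k →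
    ∫⁻ x : ℝ, ∫⁻ y : ℝ, ENNReal.ofReal ((k + x ^ 2 + y ^ 2) ^ (-m))
      ≤ ENNReal.ofReal (K * k ^ (1 - m)) := by
  obtain ⟨K, hK, h1⟩ := aux_J1 m (by linarith)
  obtain ⟨K', hK', h2⟩ := aux_J1 (m - 1 / 2) (by linarith)
  refine ⟨K * K', by positivity, fun k hk => ?_⟩
  calc _ ≤ ∫⁻ x : ℝ, ENNReal.ofReal K * ENNReal.ofReal ((k + x ^ 2) ^ (-(m - 1 / 2))) := by
        apply lintegral_mono
        intro x
        refine (h1 (k + x ^ 2) (by positivity)).trans (le_of_eq ?_)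
        beta_reduce
        rw [← ENNReal.ofReal_mul hK]
        congr 3
        ring
    _ = ENNReal.ofReal K * ∫⁻ x : ℝ, ENNReal.ofReal ((k + x ^ 2) ^ (-(m - 1 / 2))) :=
        lintegral_const_mul' _ _ ENNReal.ofReal_ne_top
    _ ≤ ENNReal.ofReal K * ENNReal.ofReal (K' * k ^ (1 / 2 - (m - 1 / 2))) := by
        gcongr
        exact h2 k hk
    _ = _ := by
        rw [← ENNReal.ofReal_mul hK, ← mul_assoc]
        congr 3
        ring

theorem aux_coords (b : OrthonormalBasis (Fin 3) ℝ (EuclideanSpace ℝ (Fin 3)))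
    (f : ℝ × ℝ × ℝ → ENNReal) (hf : Measurable f) :
    ∫⁻ x : EuclideanSpace ℝ (Fin 3), f (⟪b 0, x⟫, ⟪b 1, x⟫, ⟪b 2, x⟫)
      = ∫⁻ x : ℝ, ∫⁻ y : ℝ, ∫⁻ z : ℝ, f (x, y, z) := by
  have h1 : ∫⁻ x : EuclideanSpace ℝ (Fin 3), f (⟪b 0, x⟫, ⟪b 1, x⟫, ⟪b 2, x⟫)
      = ∫⁻ p : ℝ × (Fin 2 → ℝ), f (p.1, p.2 0, p.2 1) := by
    have hmp := ((volume_preserving_piFinSuccAbove (fun _ : Fin 3 => ℝ) 0).comp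
      (PiLp.volume_preserving_ofLp (Fin 3))).comp b.measurePreserving_repr
    rw [← hmp.lintegral_comp (by fun_prop)]
    apply lintegral_congr
    intro x
    simp only [← b.repr_apply_apply]
    rfl
  have h2 : ∫⁻ p : ℝ × (Fin 2 → ℝ), f (p.1, p.2 0, p.2 1)
      = ∫⁻ x : ℝ, ∫⁻ q : Fin 2 → ℝ, f (x, q 0, q 1) :=
    lintegral_prod _ (by fun_prop)
  rw [h1, h2]
  apply lintegral_congr
  intro x
  rw [← lintegral_prod (fun q : ℝ × ℝ => f (x, q.1, q.2)) (by fun_prop),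
    ← Measure.volume_eq_prod,
    ← (volume_preserving_finTwoArrow ℝ).lintegral_comp (by fun_prop)]
  rfl

theorem aux_basis (e : EuclideanSpace ℝ (Fin 3)) (he : ‖e‖ = 1) :
    ∃ b : OrthonormalBasis (Fin 3) ℝ (EuclideanSpace ℝ (Fin 3)), b 0 = e := by
  have h := Orthonormal.exists_orthonormalBasis_extension_of_card_eq (𝕜 := ℝ)
    (E := EuclideanSpace ℝ (Fin 3)) (ι := Fin 3) (by simp) (v := fun _ => e) (s := {0})
    (by
      constructor
      · intro i; simpa using he
      · intro i j hij; exact absurd (Subsingleton.elim i j) hij)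
  obtain ⟨b, hb⟩ := h
  exact ⟨b, hb 0 rfl⟩

theorem aux_sphere (g : EuclideanSpace ℝ (Fin 3) → ENNReal)
    (h : EuclideanSpace ℝ (Fin 3) → ENNReal) (hh : Measurable h)
    (hgh : ∀ ω : EuclideanSpace ℝ (Fin 3), ‖ω‖ = 1 → ∀ r : ℝ, 0 < r → r < 1 → g ω ≤ h (r • ω)) :
    ∫⁻ ω : sphere (0 : EuclideanSpace ℝ (Fin 3)) 1, g ω
      ∂((volume : Measure (EuclideanSpace ℝ (Fin 3))).toSphere)
      ≤ 3 * ∫⁻ x, (ball 0 1).indicator h x := by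
  have hI : Measurable ((ball (0 : EuclideanSpace ℝ (Fin 3)) 1).indicator h) :=
    hh.indicator measurableSet_ball
  have hmp := (volume : Measure (EuclideanSpace ℝ (Fin 3))).measurePreserving_homeomorphUnitSphereProd
  have hfr : Module.finrank ℝ (EuclideanSpace ℝ (Fin 3)) - 1 = 2 := by simp
  rw [hfr] at hmp
  have e1 : ∫⁻ p, (ball 0 1).indicator h ((p.2 : ℝ) • (p.1 : EuclideanSpace ℝ (Fin 3)))
      ∂((volume : Measure (EuclideanSpace ℝ (Fin 3))).toSphere.prod (Measure.volumeIoiPow 2))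
      ≤ ∫⁻ x, (ball 0 1).indicator h x := by
    rw [← hmp.lintegral_comp (by fun_prop)]
    calc _ = ∫⁻ x : ({0}ᶜ : Set (EuclideanSpace ℝ (Fin 3))), (ball 0 1).indicator h x
            ∂(Measure.comap Subtype.val volume) := by
          apply lintegral_congr
          intro x
          congr 1
          have hx : ‖(x : EuclideanSpace ℝ (Fin 3))‖ ≠ 0 := norm_ne_zero_iff.2 x.2
          simp [smul_smul, mul_inv_cancel₀ hx]
      _ ≤ _ := by
          rw [lintegral_subtype_comap (measurableSet_singleton _).compl]
          exact setLIntegral_le_lintegral _ _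
  rw [lintegral_prod _ (by fun_prop)] at e1
  have e2 : ∀ ω : sphere (0 : EuclideanSpace ℝ (Fin 3)) 1, g ω * ENNReal.ofReal (1 / 3) ≤
      ∫⁻ r : Set.Ioi (0 : ℝ), (ball 0 1).indicator h ((r : ℝ) • (ω : EuclideanSpace ℝ (Fin 3)))
        ∂(Measure.volumeIoiPow 2) := by
    intro ω
    have hω : ‖(ω : EuclideanSpace ℝ (Fin 3))‖ = 1 := by simp
    have hv := Measure.volumeIoiPow_apply_Iio 2 ⟨1, Set.mem_Ioi.2 one_pos⟩
    calc g ω * ENNReal.ofReal (1 / 3)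
        = ∫⁻ r in Set.Iio (⟨1, Set.mem_Ioi.2 one_pos⟩ : Set.Ioi (0 : ℝ)), g ω
            ∂(Measure.volumeIoiPow 2) := by
          rw [setLIntegral_const, hv]
          norm_num
      _ ≤ ∫⁻ r in Set.Iio (⟨1, Set.mem_Ioi.2 one_pos⟩ : Set.Ioi (0 : ℝ)),
            (ball 0 1).indicator h ((r : ℝ) • (ω : EuclideanSpace ℝ (Fin 3)))
            ∂(Measure.volumeIoiPow 2) := by
          apply setLIntegral_mono' measurableSet_Iio
          intro r hr
          have hr1 : (r : ℝ) < 1 := hr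
          have hr0 : 0 < (r : ℝ) := r.2
          rw [Set.indicator_of_mem]
          · exact hgh ω hω r hr0 hr1
          · simp [norm_smul, abs_of_pos hr0, hr1]
      _ ≤ _ := setLIntegral_le_lintegral _ _
  have e3 := (lintegral_mono e2).trans e1
  rw [lintegral_mul_const' _ _ ENNReal.ofReal_ne_top] at e3
  calc _ = 3 * ((∫⁻ ω : sphere (0 : EuclideanSpace ℝ (Fin 3)) 1, g ω
      ∂((volume : Measure (EuclideanSpace ℝ (Fin 3))).toSphere)) * ENNReal.ofReal (1 / 3)) := by
        rw [mul_comm, mul_assoc]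
        have : ENNReal.ofReal (1 / 3) * 3 = 1 := by
          rw [← ENNReal.ofReal_ofNat 3, ← ENNReal.ofReal_mul (by norm_num)]
          norm_num
        rw [this, mul_one]
    _ ≤ _ := by gcongr

theorem aux_J1' (m : ℝ) (hm : 1 / 2 < m) : ∃ K : ℝ, 0 ≤ K ∧ ∀ S : ℝ, 0 < S →
    ∫⁻ t : ℝ, ENNReal.ofReal ((1 + S * t ^ 2) ^ (-m)) ≤ ENNReal.ofReal (K * S ^ (-(1 / 2) : ℝ)) := by
  obtain ⟨K, hK, h1⟩ := aux_J1 m hm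
  refine ⟨K, hK, fun S hS => ?_⟩
  have hf : ∀ t : ℝ, ENNReal.ofReal ((1 + S * t ^ 2) ^ (-m)) =
      ENNReal.ofReal (S ^ (-m)) * ENNReal.ofReal ((S⁻¹ + t ^ 2) ^ (-m)) := by
    intro t
    rw [← ENNReal.ofReal_mul (by positivity), ← Real.mul_rpow hS.le (by positivity)]
    congr 2
    field_simp
  simp_rw [hf]
  rw [lintegral_const_mul' _ _ ENNReal.ofReal_ne_top]
  calc _ ≤ ENNReal.ofReal (S ^ (-m)) * ENNReal.ofReal (K * (S⁻¹) ^ (1 / 2 - m)) := by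
        gcongr
        exact h1 _ (by positivity)
    _ = _ := by
        rw [← ENNReal.ofReal_mul (by positivity), Real.inv_rpow hS.le, ← Real.rpow_neg hS.le,
          mul_left_comm, ← Real.rpow_add hS]
        congr 3
        ring

theorem aux_J2' (m : ℝ) (hm : 1 < m) : ∃ K : ℝ, 0 ≤ K ∧ ∀ S : ℝ, 0 < S →
    ∫⁻ x : ℝ, ∫⁻ y : ℝ, ENNReal.ofReal ((1 + S * (x ^ 2 + y ^ 2)) ^ (-m))
      ≤ ENNReal.ofReal (K * S ^ (-1 : ℝ)) := by
  obtain ⟨K, hK, h1⟩ := aux_J2 m hm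
  refine ⟨K, hK, fun S hS => ?_⟩
  have hf : ∀ x y : ℝ, ENNReal.ofReal ((1 + S * (x ^ 2 + y ^ 2)) ^ (-m)) =
      ENNReal.ofReal (S ^ (-m)) * ENNReal.ofReal ((S⁻¹ + x ^ 2 + y ^ 2) ^ (-m)) := by
    intro x y
    rw [← ENNReal.ofReal_mul (by positivity), ← Real.mul_rpow hS.le (by positivity)]
    congr 2
    field_simp
    ring
  simp_rw [hf]
  simp_rw [lintegral_const_mul' _ _ ENNReal.ofReal_ne_top]
  calc _ ≤ ENNReal.ofReal (S ^ (-m)) * ENNReal.ofReal (K * (S⁻¹) ^ (1 - m)) := by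
        gcongr
        exact h1 _ (by positivity)
    _ = _ := by
        rw [← ENNReal.ofReal_mul (by positivity), Real.inv_rpow hS.le, ← Real.rpow_neg hS.le,
          mul_left_comm, ← Real.rpow_add hS]
        congr 3
        ring

theorem aux_basis' (v : EuclideanSpace ℝ (Fin 3)) :
    ∃ b : OrthonormalBasis (Fin 3) ℝ (EuclideanSpace ℝ (Fin 3)),
      ∀ x, ⟪v, x⟫ = ‖v‖ * ⟪b 0, x⟫ := by
  by_cases hv : v = 0
  · exact ⟨EuclideanSpace.basisFun _ _, fun x => by simp [hv]⟩
  · obtain ⟨b, hb⟩ := aux_basis (‖v‖⁻¹ • v) (by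
      rw [norm_smul, norm_inv, norm_norm, inv_mul_cancel₀ (norm_ne_zero_iff.2 hv)])
    refine ⟨b, fun x => ?_⟩
    rw [hb, real_inner_smul_left, ← mul_assoc, mul_inv_cancel₀ (norm_ne_zero_iff.2 hv), one_mul]

theorem aux_norm (b : OrthonormalBasis (Fin 3) ℝ (EuclideanSpace ℝ (Fin 3)))
    (x : EuclideanSpace ℝ (Fin 3)) :
    ‖x‖ ^ 2 = ⟪b 0, x⟫ ^ 2 + ⟪b 1, x⟫ ^ 2 + ⟪b 2, x⟫ ^ 2 := by
  rw [← b.sum_sq_inner_right x, Fin.sum_univ_three]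

theorem aux_half (a V q : ℝ) (ha : 0 ≤ a) (hq0 : 0 ≤ q) (hq : q ≤ 1) :
    (1 + V ^ 2 * q) ^ (-a) ≤ 2 ^ a * (1 + (1 + V ^ 2) * q) ^ (-a) := by
  have h : (1 + V ^ 2 * q) ^ (-a) ≤ ((1 / 2) * (1 + (1 + V ^ 2) * q)) ^ (-a) := by
    apply Real.rpow_le_rpow_of_nonpos (by positivity) _ (by linarith)
    nlinarith [sq_nonneg V, mul_nonneg (sq_nonneg V) hq0]
  rw [Real.mul_rpow (by norm_num) (by positivity)] at h
  convert h using 2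
  rw [one_div, Real.inv_rpow (by norm_num), Real.rpow_neg (by norm_num), inv_inv]

theorem aux_Icc : ∫⁻ x : ℝ, (Set.Icc (-1 : ℝ) 1).indicator (fun _ => (1 : ENNReal)) x = 2 := by
  rw [lintegral_indicator measurableSet_Icc, setLIntegral_const, Real.volume_Icc]
  norm_num

theorem aux_N2 (a : ℝ) (ha : 1 / 2 < a) : ∃ C : ℝ, 0 ≤ C ∧ ∀ v : EuclideanSpace ℝ (Fin 3),
    ∫⁻ ω : sphere (0 : EuclideanSpace ℝ (Fin 3)) 1,
      ENNReal.ofReal ((1 + ⟪v, (ω : EuclideanSpace ℝ (Fin 3))⟫ ^ 2) ^ (-a))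
      ∂((volume : Measure (EuclideanSpace ℝ (Fin 3))).toSphere)
      ≤ ENNReal.ofReal (C * (1 + ‖v‖ ^ 2) ^ (-(1 / 2) : ℝ)) := by
  obtain ⟨K, hK, hJ⟩ := aux_J1' a ha
  refine ⟨12 * (2 ^ a * K), by positivity, fun v => ?_⟩
  obtain ⟨b, hb⟩ := aux_basis' v
  have h1 := aux_sphere (fun x => ENNReal.ofReal ((1 + ⟪v, x⟫ ^ 2) ^ (-a)))
    (fun x => ENNReal.ofReal ((1 + ⟪v, x⟫ ^ 2) ^ (-a))) (by fun_prop) (by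
      intro ω hω r hr0 hr1
      apply ENNReal.ofReal_le_ofReal
      apply Real.rpow_le_rpow_of_nonpos (by positivity) _ (by linarith)
      rw [real_inner_smul_right]
      have : r ^ 2 ≤ 1 := by nlinarith
      nlinarith [sq_nonneg ⟪v, ω⟫])
  refine h1.trans ?_
  set I : ℝ → ENNReal := (Set.Icc (-1 : ℝ) 1).indicator (fun _ => (1 : ENNReal)) with hI
  have hIm : Measurable I := measurable_const.indicator measurableSet_Icc
  have hI1 : ∀ x : ℝ, x ^ 2 ≤ 1 → I x = 1 := by
    intro x hx
    rw [hI, Set.indicator_of_mem]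
    exact abs_le.1 ((sq_le_one_iff_abs_le_one x).1 hx)
  let f : ℝ × ℝ × ℝ → ENNReal := fun p =>
    ENNReal.ofReal (2 ^ a) * ENNReal.ofReal ((1 + (1 + ‖v‖ ^ 2) * p.1 ^ 2) ^ (-a)) *
      (I p.2.1 * I p.2.2)
  have hf : Measurable f := by fun_prop
  calc _ ≤ 3 * ∫⁻ x : EuclideanSpace ℝ (Fin 3), f (⟪b 0, x⟫, ⟪b 1, x⟫, ⟪b 2, x⟫) := by
        gcongr with x
        apply Set.indicator_le
        intro x hx
        have hx1 : ‖x‖ ^ 2 ≤ 1 := by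
          have : ‖x‖ < 1 := by simpa using hx
          nlinarith [norm_nonneg x]
        rw [aux_norm b x] at hx1
        simp only [f]
        rw [hI1 _ (by nlinarith [sq_nonneg ⟪b 0, x⟫, sq_nonneg ⟪b 1, x⟫, sq_nonneg ⟪b 2, x⟫]),
          hI1 _ (by nlinarith [sq_nonneg ⟪b 0, x⟫, sq_nonneg ⟪b 1, x⟫, sq_nonneg ⟪b 2, x⟫]),
          mul_one, mul_one, ← ENNReal.ofReal_mul (by positivity), hb x, mul_pow]
        apply ENNReal.ofReal_le_ofReal
        exact aux_half a _ _ (by linarith) (by positivity)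
          (by nlinarith [sq_nonneg ⟪b 0, x⟫, sq_nonneg ⟪b 1, x⟫, sq_nonneg ⟪b 2, x⟫])
    _ = 3 * (ENNReal.ofReal (2 ^ a) *
          (∫⁻ t : ℝ, ENNReal.ofReal ((1 + (1 + ‖v‖ ^ 2) * t ^ 2) ^ (-a))) * (2 * 2)) := by
        rw [aux_coords b f hf]
        simp only [f]
        have hm1 : Measurable fun x : ℝ =>
            ENNReal.ofReal ((1 + (1 + ‖v‖ ^ 2) * x ^ 2) ^ (-a)) := by fun_prop
        simp_rw [lintegral_const_mul _ (hIm.const_mul _), lintegral_const_mul _ hIm]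
        have hI2 : ∫⁻ x, I x = 2 := aux_Icc
        rw [hI2]
        simp_rw [lintegral_const_mul _ (hIm.mul_const _)]
        rw [lintegral_mul_const _ hIm, hI2, lintegral_mul_const _ (hm1.const_mul _),
          lintegral_const_mul _ hm1]
    _ ≤ 3 * (ENNReal.ofReal (2 ^ a) *
          ENNReal.ofReal (K * (1 + ‖v‖ ^ 2) ^ (-(1 / 2) : ℝ)) * (2 * 2)) := by
        gcongr
        exact hJ _ (by positivity)
    _ = _ := by
        have hY : 0 ≤ (1 + ‖v‖ ^ 2) ^ (-(1 / 2) : ℝ) := by positivity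
        generalize (1 + ‖v‖ ^ 2) ^ (-(1 / 2) : ℝ) = Y at hY ⊢
        rw [← ENNReal.ofReal_ofNat 3, ← ENNReal.ofReal_ofNat 2,
          ← ENNReal.ofReal_mul (by positivity), ← ENNReal.ofReal_mul (by positivity),
          ← ENNReal.ofReal_mul (by positivity), ← ENNReal.ofReal_mul (by positivity)]
        congr 1
        ring

theorem aux_N1 (a : ℝ) (ha : 1 < a) : ∃ C : ℝ, 0 ≤ C ∧ ∀ v : EuclideanSpace ℝ (Fin 3),
    ∫⁻ ω : sphere (0 : EuclideanSpace ℝ (Fin 3)) 1,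
      ENNReal.ofReal ((1 + ‖v‖ ^ 2 - ⟪v, (ω : EuclideanSpace ℝ (Fin 3))⟫ ^ 2) ^ (-a))
      ∂((volume : Measure (EuclideanSpace ℝ (Fin 3))).toSphere)
      ≤ ENNReal.ofReal (C * (1 + ‖v‖ ^ 2) ^ (-1 : ℝ)) := by
  obtain ⟨K, hK, hJ⟩ := aux_J2' a ha
  refine ⟨6 * (2 ^ a * K), by positivity, fun v => ?_⟩
  obtain ⟨b, hb⟩ := aux_basis' v
  have h1 := aux_sphere (fun x => ENNReal.ofReal ((1 + ‖v‖ ^ 2 - ⟪v, x⟫ ^ 2) ^ (-a)))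
    (fun x => ENNReal.ofReal ((1 + ‖v‖ ^ 2 * ‖x‖ ^ 2 - ⟪v, x⟫ ^ 2) ^ (-a))) (by fun_prop) (by
      intro ω hω r hr0 hr1
      apply ENNReal.ofReal_le_ofReal
      have hs : ⟪v, ω⟫ ^ 2 ≤ ‖v‖ ^ 2 := by
        have := abs_real_inner_le_norm v ω
        rw [hω, mul_one] at this
        exact sq_le_sq' (by linarith [neg_abs_le ⟪v, ω⟫]) ((le_abs_self _).trans this)
      have : r ^ 2 ≤ 1 := by nlinarith
      rw [real_inner_smul_right, norm_smul, hω, mul_one, Real.norm_eq_abs, sq_abs]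
      apply Real.rpow_le_rpow_of_nonpos _ _ (by linarith)
      · nlinarith [mul_nonneg (sq_nonneg r) (sub_nonneg.2 hs)]
      · nlinarith [mul_nonneg (sub_nonneg.2 this) (sub_nonneg.2 hs)])
  refine h1.trans ?_
  set I : ℝ → ENNReal := (Set.Icc (-1 : ℝ) 1).indicator (fun _ => (1 : ENNReal)) with hI
  have hIm : Measurable I := measurable_const.indicator measurableSet_Icc
  have hI1 : ∀ x : ℝ, x ^ 2 ≤ 1 → I x = 1 := by
    intro x hx
    rw [hI, Set.indicator_of_mem]
    exact abs_le.1 ((sq_le_one_iff_abs_le_one x).1 hx)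
  let g : ℝ → ℝ → ENNReal := fun y z =>
    ENNReal.ofReal ((1 + (1 + ‖v‖ ^ 2) * (y ^ 2 + z ^ 2)) ^ (-a))
  have hg : Measurable (fun p : ℝ × ℝ => g p.1 p.2) := by fun_prop
  let f : ℝ × ℝ × ℝ → ENNReal := fun p =>
    (I p.1 * ENNReal.ofReal (2 ^ a)) * g p.2.1 p.2.2
  have hf : Measurable f := by
    have : Measurable (fun p : ℝ × ℝ × ℝ => g p.2.1 p.2.2) := hg.comp measurable_snd
    fun_prop
  calc _ ≤ 3 * ∫⁻ x : EuclideanSpace ℝ (Fin 3), f (⟪b 0, x⟫, ⟪b 1, x⟫, ⟪b 2, x⟫) := by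
        gcongr with x
        apply Set.indicator_le
        intro x hx
        have hx1 : ‖x‖ ^ 2 ≤ 1 := by
          have : ‖x‖ < 1 := by simpa using hx
          nlinarith [norm_nonneg x]
        have hn := aux_norm b x
        simp only [f, g]
        rw [hI1 _ (by nlinarith [sq_nonneg ⟪b 0, x⟫, sq_nonneg ⟪b 1, x⟫, sq_nonneg ⟪b 2, x⟫]),
          one_mul, ← ENNReal.ofReal_mul (by positivity), hb x, mul_pow]
        apply ENNReal.ofReal_le_ofReal
        have e : 1 + ‖v‖ ^ 2 * ‖x‖ ^ 2 - ‖v‖ ^ 2 * ⟪b 0, x⟫ ^ 2 =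
            1 + ‖v‖ ^ 2 * (⟪b 1, x⟫ ^ 2 + ⟪b 2, x⟫ ^ 2) := by rw [hn]; ring
        rw [e]
        exact aux_half a _ _ (by linarith) (by positivity)
          (by nlinarith [sq_nonneg ⟪b 0, x⟫, sq_nonneg ⟪b 1, x⟫, sq_nonneg ⟪b 2, x⟫])
    _ = 3 * (2 * ENNReal.ofReal (2 ^ a) * ∫⁻ y : ℝ, ∫⁻ z : ℝ, g y z) := by
        rw [aux_coords b f hf]
        simp only [f]
        have hm1 : ∀ y, Measurable (fun z => g y z) := fun y => by fun_prop
        have hm2 : Measurable (fun y => ∫⁻ z, g y z) := hg.lintegral_prod_right'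
        simp_rw [lintegral_const_mul _ (hm1 _), lintegral_const_mul _ hm2]
        have hI2 : ∫⁻ x, I x = 2 := aux_Icc
        rw [lintegral_mul_const _ (hIm.mul_const _), lintegral_mul_const _ hIm, hI2]
    _ ≤ 3 * (2 * ENNReal.ofReal (2 ^ a) *
          ENNReal.ofReal (K * (1 + ‖v‖ ^ 2) ^ (-1 : ℝ))) := by
        gcongr
        exact hJ _ (by positivity)
    _ = _ := by
        have hY : 0 ≤ (1 + ‖v‖ ^ 2) ^ (-1 : ℝ) := by positivity
        generalize (1 + ‖v‖ ^ 2) ^ (-1 : ℝ) = Y at hY ⊢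
        rw [← ENNReal.ofReal_ofNat 3, ← ENNReal.ofReal_ofNat 2,
          ← ENNReal.ofReal_mul (by positivity), ← ENNReal.ofReal_mul (by positivity),
          ← ENNReal.ofReal_mul (by positivity)]
        congr 1
        ring

theorem aux_A (γ m : ℝ) (hγ0 : 0 ≤ γ) (hγ1 : γ ≤ 1) (hm : 2 < m) :
    ∃ K : ℝ, 0 ≤ K ∧ ∀ k s R : ℝ, 0 < k → 0 ≤ R → k ≤ R ^ 2 → |s| ≤ R →
    ∫⁻ x : ℝ, ENNReal.ofReal (|x| ^ γ * (k + (x + s) ^ 2) ^ (-m))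
      ≤ ENNReal.ofReal (K * R ^ γ * k ^ (1 / 2 - m)) := by
  obtain ⟨K, hK, hJ⟩ := aux_J1 m (by linarith)
  obtain ⟨K', hK', hJ'⟩ := aux_J1 (m - γ / 2) (by linarith)
  refine ⟨K + K', by positivity, fun k s R hk hR hkR hsR => ?_⟩
  calc _ ≤ ∫⁻ x : ℝ, (ENNReal.ofReal ((k + (x + s) ^ 2) ^ (-(m - γ / 2))) +
            ENNReal.ofReal (R ^ γ) * ENNReal.ofReal ((k + (x + s) ^ 2) ^ (-m))) := by
        apply lintegral_mono
        intro x
        beta_reduce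
        rw [← ENNReal.ofReal_mul (by positivity),
          ← ENNReal.ofReal_add (by positivity) (by positivity)]
        apply ENNReal.ofReal_le_ofReal
        have hP : 0 < k + (x + s) ^ 2 := by positivity
        have h1 : |x| ^ γ ≤ |x + s| ^ γ + |s| ^ γ := by
          refine le_trans ?_ (Real.rpow_add_le_add_rpow (abs_nonneg _) (abs_nonneg _) hγ0 hγ1)
          apply Real.rpow_le_rpow (abs_nonneg _) _ hγ0
          have := abs_sub (x + s) s
          simpa using this
        have h2 : |s| ^ γ ≤ R ^ γ := Real.rpow_le_rpow (abs_nonneg _) hsR hγ0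
        have h3 : |x + s| ^ γ ≤ (k + (x + s) ^ 2) ^ (γ / 2) := by
          have : |x + s| ^ γ = ((x + s) ^ 2) ^ (γ / 2) := by
            rw [← sq_abs, ← Real.rpow_natCast, ← Real.rpow_mul (abs_nonneg _)]
            congr 1
            push_cast
            ring
          rw [this]
          exact Real.rpow_le_rpow (by positivity) (by linarith) (by linarith)
        have h4 : (k + (x + s) ^ 2) ^ (-(m - γ / 2)) =
            (k + (x + s) ^ 2) ^ (γ / 2) * (k + (x + s) ^ 2) ^ (-m) := by
          rw [← Real.rpow_add hP]
          congr 1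
          ring
        rw [h4, ← add_mul]
        gcongr
        linarith
    _ = (∫⁻ x : ℝ, ENNReal.ofReal ((k + x ^ 2) ^ (-(m - γ / 2)))) +
            ENNReal.ofReal (R ^ γ) * ∫⁻ x : ℝ, ENNReal.ofReal ((k + x ^ 2) ^ (-m)) := by
        rw [lintegral_add_left (by fun_prop), lintegral_const_mul' _ _ ENNReal.ofReal_ne_top,
          lintegral_add_right_eq_self
            (fun x : ℝ => ENNReal.ofReal ((k + x ^ 2) ^ (-(m - γ / 2)))) s,
          lintegral_add_right_eq_self (fun x : ℝ => ENNReal.ofReal ((k + x ^ 2) ^ (-m))) s]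
    _ ≤ ENNReal.ofReal (K' * k ^ (1 / 2 - (m - γ / 2))) +
            ENNReal.ofReal (R ^ γ) * ENNReal.ofReal (K * k ^ (1 / 2 - m)) := by
        gcongr
        · exact hJ' k hk
        · exact hJ k hk
    _ ≤ _ := by
        rw [← ENNReal.ofReal_mul (by positivity),
          ← ENNReal.ofReal_add (by positivity) (by positivity)]
        apply ENNReal.ofReal_le_ofReal
        have h4 : k ^ (1 / 2 - (m - γ / 2)) = k ^ (γ / 2) * k ^ (1 / 2 - m) := by
          rw [← Real.rpow_add hk]
          congr 1
          ring
        have h5 : k ^ (γ / 2) ≤ R ^ γ := by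
          have : R ^ γ = (R ^ 2) ^ (γ / 2) := by
            rw [← Real.rpow_natCast, ← Real.rpow_mul hR]
            congr 1
            push_cast
            ring
          rw [this]
          exact Real.rpow_le_rpow hk.le hkR (by linarith)
        have h6 : 0 ≤ k ^ (1 / 2 - m) := by positivity
        rw [h4]
        nlinarith [mul_nonneg hK' (mul_nonneg h6 (sub_nonneg.2 h5))]

theorem aux_G (γ m : ℝ) (hγ0 : 0 ≤ γ) (hγ1 : γ ≤ 1) (hm : 2 < m) :
    ∃ K : ℝ, 0 ≤ K ∧ ∀ v ω : EuclideanSpace ℝ (Fin 3), ‖ω‖ = 1 →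
    ∫⁻ u : EuclideanSpace ℝ (Fin 3), ENNReal.ofReal (|⟪u, ω⟫| ^ γ *
        (1 + ‖u + v - ⟪u, ω⟫ • ω‖ ^ 2) ^ (-m) * (1 + ‖v + ⟪u, ω⟫ • ω‖ ^ 2) ^ (-m))
      ≤ ENNReal.ofReal (K * (1 + ‖v‖) ^ γ * ((1 + ‖v‖ ^ 2 - ⟪v, ω⟫ ^ 2) ^ (1 / 2 - m) *
        (1 + ⟪v, ω⟫ ^ 2) ^ (1 - m))) := by
  obtain ⟨K, hK, hA⟩ := aux_A γ m hγ0 hγ1 hm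
  obtain ⟨K', hK', hJ⟩ := aux_J2 m (by linarith)
  refine ⟨K * K', by positivity, fun v ω hω => ?_⟩
  obtain ⟨b, hb⟩ := aux_basis ω hω
  have h00 : ⟪b 0, b 0⟫ = 1 := by rw [real_inner_self_eq_norm_sq, b.norm_eq_one]; norm_num
  have h10 : ⟪b 1, b 0⟫ = 0 := b.orthonormal.2 (by decide)
  have h20 : ⟪b 2, b 0⟫ = 0 := b.orthonormal.2 (by decide)
  subst hb
  have hv := aux_norm b v
  set a0 := ⟪b 0, v⟫ with ha0
  set a1 := ⟪b 1, v⟫ with ha1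
  set a2 := ⟪b 2, v⟫ with ha2
  let A : ℝ → ENNReal := fun x =>
    ENNReal.ofReal (|x| ^ γ * ((1 + a1 ^ 2 + a2 ^ 2) + (x + a0) ^ 2) ^ (-m))
  let P : ℝ → ℝ → ENNReal := fun y z =>
    ENNReal.ofReal (((1 + a0 ^ 2) + y ^ 2 + z ^ 2) ^ (-m))
  have hAm : Measurable A := by fun_prop
  have hPm : Measurable (fun p : ℝ × ℝ => P p.1 p.2) := by fun_prop
  have hPm' : Measurable (fun p : ℝ × ℝ => P (p.1 + a1) (p.2 + a2)) := by fun_prop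
  let f : ℝ × ℝ × ℝ → ENNReal := fun p => A p.1 * P (p.2.1 + a1) (p.2.2 + a2)
  have hf : Measurable f := by
    have : Measurable (fun p : ℝ × ℝ × ℝ => P (p.2.1 + a1) (p.2.2 + a2)) :=
      hPm'.comp measurable_snd
    fun_prop
  have hva : ‖v‖ ^ 2 - a0 ^ 2 = a1 ^ 2 + a2 ^ 2 := by linarith
  have ha0v : |a0| ≤ ‖v‖ := by
    apply abs_le_of_sq_le_sq _ (norm_nonneg v)
    nlinarith [sq_nonneg a1, sq_nonneg a2]
  calc _ = ∫⁻ u : EuclideanSpace ℝ (Fin 3), f (⟪b 0, u⟫, ⟪b 1, u⟫, ⟪b 2, u⟫) := by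
        apply lintegral_congr
        intro u
        simp only [f, A, P]
        rw [← ENNReal.ofReal_mul (by positivity), aux_norm b (u + v - _),
          aux_norm b (v + _)]
        simp only [inner_add_right, inner_sub_right, real_inner_smul_right, h00, h10, h20,
          ← ha0, ← ha1, ← ha2, real_inner_comm (b 0) u]
        rw [mul_right_comm]
        congr 2
        · congr 2
          ring
        · congr 1
          ring
    _ = (∫⁻ x, A x) * ∫⁻ y, ∫⁻ z, P y z := by
        rw [aux_coords b f hf]
        simp only [f]
        have hm1 : ∀ y, Measurable (fun z => P (y + a1) (z + a2)) := fun y => by fun_prop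
        have hm2 : Measurable (fun y => ∫⁻ z, P (y + a1) (z + a2)) := hPm'.lintegral_prod_right'
        simp_rw [lintegral_const_mul _ (hm1 _), lintegral_const_mul _ hm2]
        rw [lintegral_mul_const _ hAm]
        congr 1
        rw [← lintegral_add_right_eq_self (fun y => ∫⁻ z, P y z) a1]
        apply lintegral_congr
        intro y
        exact lintegral_add_right_eq_self (fun z => P (y + a1) z) a2
    _ ≤ ENNReal.ofReal (K * (1 + ‖v‖) ^ γ * (1 + a1 ^ 2 + a2 ^ 2) ^ (1 / 2 - m)) *
          ENNReal.ofReal (K' * (1 + a0 ^ 2) ^ (1 - m)) := by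
        gcongr
        · apply hA _ _ _ (by positivity) (by positivity)
          · nlinarith [norm_nonneg v, sq_nonneg a0]
          · linarith
        · exact hJ _ (by positivity)
    _ = _ := by
        rw [← ENNReal.ofReal_mul (by positivity), real_inner_comm, ← ha0, add_sub_assoc, hva,
          ← add_assoc]
        congr 1
        ring

theorem aux_split (m P Q T : ℝ) (hm : 2 < m) (hP : 1 ≤ P) (hQ : 1 ≤ Q) (hT : T ≤ P + Q)
    (hT0 : 0 < T) :
    P ^ (1 / 2 - m) * Q ^ (1 - m) ≤
      2 ^ m * (T ^ (1 - m) * P ^ (1 / 2 - m) + T ^ (1 / 2 - m) * Q ^ (1 - m)) := by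
  have hP0 : 0 < P := by linarith
  have hQ0 : 0 < Q := by linarith
  have key : ∀ X e : ℝ, T / 2 ≤ X → e ≤ 0 → -m ≤ e → X ^ e ≤ 2 ^ m * T ^ e := by
    intro X e hX he hem
    calc X ^ e ≤ (T / 2) ^ e := Real.rpow_le_rpow_of_nonpos (by positivity) hX he
      _ = 2 ^ (-e) * T ^ e := by
          rw [Real.div_rpow hT0.le (by norm_num), Real.rpow_neg (by norm_num)]
          ring
      _ ≤ _ := by
          gcongr
          · norm_num
          · linarith
  rcases le_total (T / 2) Q with h | h
  · calc _ ≤ P ^ (1 / 2 - m) * (2 ^ m * T ^ (1 - m)) := by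
          gcongr
          exact key Q _ h (by linarith) (by linarith)
      _ ≤ _ := by
          have : 0 ≤ 2 ^ m * (T ^ (1 / 2 - m) * Q ^ (1 - m)) := by positivity
          linarith
  · calc _ ≤ (2 ^ m * T ^ (1 / 2 - m)) * Q ^ (1 - m) := by
          gcongr
          exact key P _ (by linarith) (by linarith) (by linarith)
      _ ≤ _ := by
          have : 0 ≤ 2 ^ m * (T ^ (1 - m) * P ^ (1 / 2 - m)) := by positivity
          linarith

theorem aux_gain (γ m : ℝ) (hγ0 : 0 ≤ γ) (hγ1 : γ ≤ 1) (hm : 2 < m) :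
    ∃ C : ℝ, 0 ≤ C ∧ ∀ v : EuclideanSpace ℝ (Fin 3),
    ∫⁻ vs : EuclideanSpace ℝ (Fin 3), ∫⁻ ω : sphere (0 : EuclideanSpace ℝ (Fin 3)) 1,
      ENNReal.ofReal (|⟪vs - v, (ω : EuclideanSpace ℝ (Fin 3))⟫| ^ γ *
        (1 + ‖vs - ⟪vs - v, (ω : EuclideanSpace ℝ (Fin 3))⟫ •
          (ω : EuclideanSpace ℝ (Fin 3))‖ ^ 2) ^ (-m) *
        (1 + ‖v + ⟪vs - v, (ω : EuclideanSpace ℝ (Fin 3))⟫ •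
          (ω : EuclideanSpace ℝ (Fin 3))‖ ^ 2) ^ (-m))
      ∂((volume : Measure (EuclideanSpace ℝ (Fin 3))).toSphere)
      ≤ ENNReal.ofReal (C * ((1 + ‖v‖) ^ γ * (1 + ‖v‖ ^ 2) ^ (-m))) := by
  obtain ⟨K, hK, hG⟩ := aux_G γ m hγ0 hγ1 hm
  obtain ⟨C₁, hC₁, hN1⟩ := aux_N1 (m - 1 / 2) (by linarith)
  obtain ⟨C₂, hC₂, hN2⟩ := aux_N2 (m - 1) (by linarith)
  refine ⟨K * 2 ^ m * (C₁ + C₂), by positivity, fun v => ?_⟩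
  rw [lintegral_lintegral_swap (by
    apply Measurable.aemeasurable
    unfold Function.uncurry
    fun_prop)]
  set T := 1 + ‖v‖ ^ 2 with hT
  have hT0 : 0 < T := by positivity
  calc _ ≤ ∫⁻ ω : sphere (0 : EuclideanSpace ℝ (Fin 3)) 1,
        (ENNReal.ofReal (K * (1 + ‖v‖) ^ γ * 2 ^ m) *
        (ENNReal.ofReal (T ^ (1 - m)) * ENNReal.ofReal
            ((T - ⟪v, (ω : EuclideanSpace ℝ (Fin 3))⟫ ^ 2) ^ (-(m - 1 / 2))) +
          ENNReal.ofReal (T ^ (1 / 2 - m)) * ENNReal.ofReal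
            ((1 + ⟪v, (ω : EuclideanSpace ℝ (Fin 3))⟫ ^ 2) ^ (-(m - 1)))))
      ∂((volume : Measure (EuclideanSpace ℝ (Fin 3))).toSphere) := by
        apply lintegral_mono
        intro ω
        beta_reduce
        have hω : ‖(ω : EuclideanSpace ℝ (Fin 3))‖ = 1 := by simp
        generalize (ω : EuclideanSpace ℝ (Fin 3)) = w at hω ⊢
        rw [← lintegral_add_right_eq_self _ v]
        simp only [add_sub_cancel_right]
        refine (hG v w hω).trans ?_
        have hs : ⟪v, w⟫ ^ 2 ≤ ‖v‖ ^ 2 := by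
          have := abs_real_inner_le_norm v w
          rw [hω, mul_one] at this
          exact sq_le_sq' (by linarith [neg_abs_le ⟪v, w⟫]) ((le_abs_self _).trans this)
        have hp : 0 < T - ⟪v, w⟫ ^ 2 := by linarith
        rw [← ENNReal.ofReal_mul (by positivity), ← ENNReal.ofReal_mul (by positivity),
          ← ENNReal.ofReal_add (by positivity) (by positivity),
          ← ENNReal.ofReal_mul (by positivity)]
        apply ENNReal.ofReal_le_ofReal
        rw [mul_assoc _ (2 ^ m)]
        refine mul_le_mul_of_nonneg_left ?_ (by positivity)
        have := aux_split m (T - ⟪v, w⟫ ^ 2) (1 + ⟪v, w⟫ ^ 2) T hm (by linarith)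
          (by linarith [sq_nonneg ⟪v, w⟫]) (by linarith) hT0
        rw [neg_sub, neg_sub]
        exact this
    _ = ENNReal.ofReal (K * (1 + ‖v‖) ^ γ * 2 ^ m) *
        (ENNReal.ofReal (T ^ (1 - m)) * (∫⁻ ω : sphere (0 : EuclideanSpace ℝ (Fin 3)) 1,
            ENNReal.ofReal ((T - ⟪v, (ω : EuclideanSpace ℝ (Fin 3))⟫ ^ 2) ^ (-(m - 1 / 2)))
              ∂((volume : Measure (EuclideanSpace ℝ (Fin 3))).toSphere)) +
          ENNReal.ofReal (T ^ (1 / 2 - m)) * ∫⁻ ω : sphere (0 : EuclideanSpace ℝ (Fin 3)) 1,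
            ENNReal.ofReal ((1 + ⟪v, (ω : EuclideanSpace ℝ (Fin 3))⟫ ^ 2) ^ (-(m - 1)))
              ∂((volume : Measure (EuclideanSpace ℝ (Fin 3))).toSphere)) := by
        rw [lintegral_const_mul' _ _ ENNReal.ofReal_ne_top, lintegral_add_left (by fun_prop),
          lintegral_const_mul' _ _ ENNReal.ofReal_ne_top,
          lintegral_const_mul' _ _ ENNReal.ofReal_ne_top]
    _ ≤ ENNReal.ofReal (K * (1 + ‖v‖) ^ γ * 2 ^ m) *
        (ENNReal.ofReal (T ^ (1 - m)) * ENNReal.ofReal (C₁ * T ^ (-1 : ℝ)) +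
          ENNReal.ofReal (T ^ (1 / 2 - m)) * ENNReal.ofReal (C₂ * T ^ (-(1 / 2) : ℝ))) := by
        gcongr
        · exact hN1 v
        · exact hN2 v
    _ = _ := by
        rw [← ENNReal.ofReal_mul (by positivity), ← ENNReal.ofReal_mul (by positivity),
          ← ENNReal.ofReal_add (by positivity) (by positivity),
          ← ENNReal.ofReal_mul (by positivity)]
        congr 1
        have e1 : T ^ (1 - m) * T ^ (-1 : ℝ) = T ^ (-m) := by
          rw [← Real.rpow_add hT0]; congr 1; ring
        have e2 : T ^ (1 / 2 - m) * T ^ (-(1 / 2) : ℝ) = T ^ (-m) := by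
          rw [← Real.rpow_add hT0]; congr 1; ring
        calc _ = K * (1 + ‖v‖) ^ γ * 2 ^ m * (C₁ * (T ^ (1 - m) * T ^ (-1 : ℝ)) +
              C₂ * (T ^ (1 / 2 - m) * T ^ (-(1 / 2) : ℝ))) := by ring
          _ = _ := by rw [e1, e2]; ring

theorem aux_loss (γ m : ℝ) (hγ0 : 0 ≤ γ) (hγ1 : γ ≤ 1) (hm : 2 < m) :
    ∃ C : ℝ, 0 ≤ C ∧ ∀ v : EuclideanSpace ℝ (Fin 3),
    ∫⁻ vs : EuclideanSpace ℝ (Fin 3), ∫⁻ _ω : sphere (0 : EuclideanSpace ℝ (Fin 3)) 1,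
      ENNReal.ofReal (‖v - vs‖ ^ γ * (1 + ‖vs‖ ^ 2) ^ (-m))
      ∂((volume : Measure (EuclideanSpace ℝ (Fin 3))).toSphere)
      ≤ ENNReal.ofReal (C * (1 + ‖v‖) ^ γ) := by
  have hint : Integrable (fun u : EuclideanSpace ℝ (Fin 3) =>
      2 ^ γ * (1 + ‖u‖ ^ 2) ^ (-(2 * m - γ) / 2)) :=
    (integrable_rpow_neg_one_add_norm_sq (by simp; linarith)).const_mul _
  set A := ∫ u : EuclideanSpace ℝ (Fin 3), 2 ^ γ * (1 + ‖u‖ ^ 2) ^ (-(2 * m - γ) / 2) with hA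
  have hA0 : 0 ≤ A := integral_nonneg fun u => by positivity
  have hlin := ofReal_integral_eq_lintegral_ofReal hint
    (Filter.Eventually.of_forall fun t => by positivity)
  set σ := (volume : Measure (EuclideanSpace ℝ (Fin 3))).toSphere with hσ
  refine ⟨A * σ.real Set.univ, by positivity, fun v => ?_⟩
  have hfin : σ Set.univ = ENNReal.ofReal (σ.real Set.univ) := by
    simp [Measure.real, ENNReal.ofReal_toReal]
  simp_rw [lintegral_const]
  rw [lintegral_mul_const' _ _ (measure_ne_top _ _), hfin]
  calc _ ≤ (∫⁻ u : EuclideanSpace ℝ (Fin 3), ENNReal.ofReal ((1 + ‖v‖) ^ γ) *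
          ENNReal.ofReal (2 ^ γ * (1 + ‖u‖ ^ 2) ^ (-(2 * m - γ) / 2))) *
          ENNReal.ofReal (σ.real Set.univ) := by
        gcongr with u
        rw [← ENNReal.ofReal_mul (by positivity)]
        apply ENNReal.ofReal_le_ofReal
        have hP : 0 < 1 + ‖u‖ ^ 2 := by positivity
        have h1 : ‖v - u‖ ≤ (1 + ‖v‖) * (2 * √(1 + ‖u‖ ^ 2)) := by
          have h2 := norm_sub_le v u
          have h3 : ‖u‖ ≤ √(1 + ‖u‖ ^ 2) := Real.le_sqrt_of_sq_le (by linarith)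
          have h4 : 1 ≤ √(1 + ‖u‖ ^ 2) := Real.le_sqrt_of_sq_le (by nlinarith [norm_nonneg u])
          nlinarith [norm_nonneg u, norm_nonneg v]
        have h2 : ‖v - u‖ ^ γ ≤ (1 + ‖v‖) ^ γ * (2 ^ γ * (1 + ‖u‖ ^ 2) ^ (γ / 2)) := by
          refine (Real.rpow_le_rpow (norm_nonneg _) h1 hγ0).trans (le_of_eq ?_)
          rw [Real.mul_rpow (by positivity) (by positivity),
            Real.mul_rpow (by positivity) (by positivity), Real.sqrt_eq_rpow,
            ← Real.rpow_mul hP.le]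
          congr 3
          ring
        have h3 : (1 + ‖u‖ ^ 2) ^ (-(2 * m - γ) / 2) =
            (1 + ‖u‖ ^ 2) ^ (γ / 2) * (1 + ‖u‖ ^ 2) ^ (-m) := by
          rw [← Real.rpow_add hP]
          congr 1
          ring
        rw [h3, ← mul_assoc (2 ^ γ), ← mul_assoc]
        gcongr
    _ = _ := by
        rw [lintegral_const_mul' _ _ ENNReal.ofReal_ne_top, ← hlin,
          ← ENNReal.ofReal_mul (by positivity), ← ENNReal.ofReal_mul (by positivity)]
        congr 1
        ring

theorem aux_abs_le {X : Type*} [MeasurableSpace X] (ν : Measure X) {Y : Type*}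
    [MeasurableSpace Y] (μ : Measure Y) (f g : Y → X → ℝ) (c D : ℝ) (hc : 0 ≤ c) (hD : 0 ≤ D)
    (hfg : ∀ y x, |f y x| ≤ c * g y x)
    (h : ∫⁻ y, ∫⁻ x, ENNReal.ofReal (g y x) ∂ν ∂μ ≤ ENNReal.ofReal D) :
    |∫ y, ∫ x, f y x ∂ν ∂μ| ≤ c * D := by
  rw [← ENNReal.ofReal_le_ofReal_iff (by positivity), ← Real.enorm_eq_ofReal_abs]
  refine (enorm_integral_le_lintegral_enorm _).trans ?_
  calc _ ≤ ∫⁻ y, ∫⁻ x, ENNReal.ofReal c * ENNReal.ofReal (g y x) ∂ν ∂μ := by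
        apply lintegral_mono
        intro y
        refine (enorm_integral_le_lintegral_enorm _).trans ?_
        apply lintegral_mono
        intro x
        beta_reduce
        rw [Real.enorm_eq_ofReal_abs, ← ENNReal.ofReal_mul hc]
        exact ENNReal.ofReal_le_ofReal (hfg y x)
    _ = ENNReal.ofReal c * ∫⁻ y, ∫⁻ x, ENNReal.ofReal (g y x) ∂ν ∂μ := by
        simp_rw [lintegral_const_mul' _ _ ENNReal.ofReal_ne_top]
    _ ≤ _ := by
        rw [ENNReal.ofReal_mul hc]
        gcongr

/-- Weighted `L^∞` bound on the gain and loss parts of the Boltzmann collision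
operator (hard potentials, Grad cutoff, weight `w^ℓ(v) = (1+|v|²)^{ℓ/2}` with
`ℓ > 4`): there is `C > 0`, depending only on `γ`, `ℓ`, `C_B`, with
`|Q₊(F₁,F₂)(v)| + |Q₋(F₁,F₂)(v)|
  ≤ C (1+|v|)^γ (1+|v|²)^{−ℓ/2} ‖w^ℓ F₁‖_{L^∞} ‖w^ℓ F₂‖_{L^∞}`. -/
theorem collision_operator_weighted_bound
    (γ C_B ℓ : ℝ) (hγ0 : 0 ≤ γ) (hγ1 : γ ≤ 1) (hCB : 0 ≤ C_B) (hℓ : 4 < ℓ) :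
    ∃ C > 0, ∀ B₀ : ℝ → ℝ, Measurable B₀ →
      (∀ c ∈ Set.Icc (-1 : ℝ) 1, 0 ≤ B₀ c ∧ B₀ c ≤ C_B * |c|) →
      ∀ F₁ F₂ : EuclideanSpace ℝ (Fin 3) → ℝ, Measurable F₁ → Measurable F₂ →
      ∀ M₁ M₂ : ℝ,
      (∀ u : EuclideanSpace ℝ (Fin 3), (1 + ‖u‖ ^ 2) ^ (ℓ / 2) * |F₁ u| ≤ M₁) →
      (∀ u : EuclideanSpace ℝ (Fin 3), (1 + ‖u‖ ^ 2) ^ (ℓ / 2) * |F₂ u| ≤ M₂) →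
      ∀ v : EuclideanSpace ℝ (Fin 3),
        |∫ vs : EuclideanSpace ℝ (Fin 3),
            ∫ ω : sphere (0 : EuclideanSpace ℝ (Fin 3)) 1,
              ‖v - vs‖ ^ γ * B₀ (⟪(ω : EuclideanSpace ℝ (Fin 3)), v - vs⟫ / ‖v - vs‖) *
                F₁ (vs - ⟪vs - v, (ω : EuclideanSpace ℝ (Fin 3))⟫ •
                      (ω : EuclideanSpace ℝ (Fin 3))) *
                F₂ (v + ⟪vs - v, (ω : EuclideanSpace ℝ (Fin 3))⟫ •
                      (ω : EuclideanSpace ℝ (Fin 3)))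
              ∂((volume : Measure (EuclideanSpace ℝ (Fin 3))).toSphere)|
        + |∫ vs : EuclideanSpace ℝ (Fin 3),
            ∫ ω : sphere (0 : EuclideanSpace ℝ (Fin 3)) 1,
              ‖v - vs‖ ^ γ * B₀ (⟪(ω : EuclideanSpace ℝ (Fin 3)), v - vs⟫ / ‖v - vs‖) *
                F₁ vs * F₂ v
              ∂((volume : Measure (EuclideanSpace ℝ (Fin 3))).toSphere)|
        ≤ C * (1 + ‖v‖) ^ γ * (1 + ‖v‖ ^ 2) ^ (-ℓ / 2) * M₁ * M₂ := by

  obtain ⟨Cg, hCg, hg⟩ := aux_gain γ (ℓ / 2) hγ0 hγ1 (by linarith)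
  obtain ⟨Cl, hCl, hl⟩ := aux_loss γ (ℓ / 2) hγ0 hγ1 (by linarith)
  refine ⟨C_B * (Cg + Cl) + 1, by positivity, ?_⟩
  intro B₀ _ hB F₁ F₂ _ _ M₁ M₂ hF₁ hF₂ v
  have hM₁ : 0 ≤ M₁ := le_trans (by positivity) (hF₁ 0)
  have hM₂ : 0 ≤ M₂ := le_trans (by positivity) (hF₂ 0)
  have hF : ∀ (F : EuclideanSpace ℝ (Fin 3) → ℝ) (M : ℝ),
      (∀ u : EuclideanSpace ℝ (Fin 3), (1 + ‖u‖ ^ 2) ^ (ℓ / 2) * |F u| ≤ M) →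
      ∀ u, |F u| ≤ M * (1 + ‖u‖ ^ 2) ^ (-(ℓ / 2)) := by
    intro F M h u
    have hp : 0 < (1 + ‖u‖ ^ 2) ^ (ℓ / 2) := by positivity
    rw [Real.rpow_neg (by positivity), ← div_eq_mul_inv, le_div_iff₀ hp, mul_comm]
    exact h u
  have h1 := hF F₁ M₁ hF₁
  have h2 := hF F₂ M₂ hF₂
  -- the angular kernel
  have hc : ∀ (vs ω : EuclideanSpace ℝ (Fin 3)), ‖ω‖ = 1 →
      |⟪ω, v - vs⟫ / ‖v - vs‖| ≤ 1 := by
    intro vs ω hω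
    rw [abs_div, abs_norm]
    apply div_le_one_of_le₀ _ (norm_nonneg _)
    have := abs_real_inner_le_norm ω (v - vs)
    rwa [hω, one_mul] at this
  have hB' : ∀ (vs ω : EuclideanSpace ℝ (Fin 3)), ‖ω‖ = 1 →
      |B₀ (⟪ω, v - vs⟫ / ‖v - vs‖)| ≤ C_B * |⟪ω, v - vs⟫ / ‖v - vs‖| := by
    intro vs ω hω
    obtain ⟨hB1, hB2⟩ := hB _ (abs_le.1 (hc vs ω hω))
    rwa [abs_of_nonneg hB1]
  have hk1 : ∀ (vs ω : EuclideanSpace ℝ (Fin 3)), ‖ω‖ = 1 →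
      ‖v - vs‖ ^ γ * |B₀ (⟪ω, v - vs⟫ / ‖v - vs‖)| ≤ C_B * ‖v - vs‖ ^ γ := by
    intro vs ω hω
    rw [mul_comm]
    gcongr
    nlinarith [hB' vs ω hω, hc vs ω hω]
  have hk2 : ∀ (vs ω : EuclideanSpace ℝ (Fin 3)), ‖ω‖ = 1 →
      ‖v - vs‖ ^ γ * |B₀ (⟪ω, v - vs⟫ / ‖v - vs‖)| ≤ C_B * |⟪vs - v, ω⟫| ^ γ := by
    intro vs ω hω
    have hcos : |⟪ω, v - vs⟫ / ‖v - vs‖| ≤ |⟪ω, v - vs⟫ / ‖v - vs‖| ^ γ := by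
      rcases (abs_nonneg (⟪ω, v - vs⟫ / ‖v - vs‖)).eq_or_lt with h0 | h0
      · rw [← h0]; positivity
      · simpa using Real.rpow_le_rpow_of_exponent_ge h0 (hc vs ω hω) hγ1
    have hab : |⟪vs - v, ω⟫| = ‖v - vs‖ * |⟪ω, v - vs⟫ / ‖v - vs‖| := by
      rw [← neg_sub v vs, inner_neg_left, abs_neg, real_inner_comm, abs_div, abs_norm]
      rcases eq_or_ne (v - vs) 0 with h | h
      · simp [h]
      · rw [mul_div_cancel₀ _ (norm_ne_zero_iff.2 h)]
    rw [hab, Real.mul_rpow (norm_nonneg _) (abs_nonneg _)]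
    calc _ ≤ ‖v - vs‖ ^ γ * (C_B * |⟪ω, v - vs⟫ / ‖v - vs‖| ^ γ) := by
          gcongr
          exact (hB' vs ω hω).trans (by gcongr)
      _ = _ := by ring
  have hℓ2 : -ℓ / 2 = -(ℓ / 2) := by ring
  rw [hℓ2]
  have hgain := aux_abs_le ((volume : Measure (EuclideanSpace ℝ (Fin 3))).toSphere) volume
    (fun vs ω => ‖v - vs‖ ^ γ * B₀ (⟪(ω : EuclideanSpace ℝ (Fin 3)), v - vs⟫ / ‖v - vs‖) *
                F₁ (vs - ⟪vs - v, (ω : EuclideanSpace ℝ (Fin 3))⟫ •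
                      (ω : EuclideanSpace ℝ (Fin 3))) *
                F₂ (v + ⟪vs - v, (ω : EuclideanSpace ℝ (Fin 3))⟫ •
                      (ω : EuclideanSpace ℝ (Fin 3)))) _ (C_B * M₁ * M₂) _
    (by positivity) (by positivity) (by
      intro vs ω
      have hω : ‖(ω : EuclideanSpace ℝ (Fin 3))‖ = 1 := by simp
      generalize (ω : EuclideanSpace ℝ (Fin 3)) = w at hω
      have := mul_le_mul (mul_le_mul (hk2 vs w hω) (h1 (vs - ⟪vs - v, w⟫ • w)) (abs_nonneg _)
        (by positivity)) (h2 (v + ⟪vs - v, w⟫ • w)) (abs_nonneg _) (by positivity)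
      rw [abs_mul, abs_mul, abs_mul, abs_of_nonneg (Real.rpow_nonneg (norm_nonneg (v - vs)) γ)]
      refine this.trans (le_of_eq ?_)
      ring) (hg v)
  have hloss := aux_abs_le ((volume : Measure (EuclideanSpace ℝ (Fin 3))).toSphere) volume
    (fun vs ω => ‖v - vs‖ ^ γ * B₀ (⟪(ω : EuclideanSpace ℝ (Fin 3)), v - vs⟫ / ‖v - vs‖) *
                F₁ vs * F₂ v) _ (C_B * M₁ * (M₂ * (1 + ‖v‖ ^ 2) ^ (-(ℓ / 2)))) _
    (by positivity) (by positivity) (by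
      intro vs ω
      have hω : ‖(ω : EuclideanSpace ℝ (Fin 3))‖ = 1 := by simp
      generalize (ω : EuclideanSpace ℝ (Fin 3)) = w at hω
      have := mul_le_mul (mul_le_mul (hk1 vs w hω) (h1 vs) (abs_nonneg _)
        (by positivity)) (h2 v) (abs_nonneg _) (by positivity)
      rw [abs_mul, abs_mul, abs_mul, abs_of_nonneg (Real.rpow_nonneg (norm_nonneg (v - vs)) γ)]
      refine this.trans (le_of_eq ?_)
      ring) (hl v)
  refine (add_le_add hgain hloss).trans ?_
  have hpos : 0 ≤ (1 + ‖v‖) ^ γ * (1 + ‖v‖ ^ 2) ^ (-(ℓ / 2)) * M₁ * M₂ := by positivity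
  nlinarith [hpos]
end
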